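/- arXiv:2003.06865 — 2 statements merged into one kernel-verified Lean document; each statement's English description precedes it below -/
import Mathlib

section
/- Let X be a simplicial set and let T : (Δ/X)ᵒᵖ ⥤ 𝒜 be a contravariant Gabriel–Zisman natural system with values in a cocomplete abelian category 𝒜 in which coproducts are exact and such that the functor category Fun((Δ/X)ᵒᵖ, 𝒜) has enough projectives (e.g. 𝒜 the category of modules over a ring). Then for every n ≥ 0 the n-th Gabriel–Zisman homology of X with coefficients in T is isomorphic to the n-th left derived functor of the colimit functor applied to T: H_n^{GZ}(X, T) ≅ colim_n^{(Δ/X)ᵒᵖ} T, i.e. H_n^{GZ}(X,T) ≅ ((colim : Fun((Δ/X)ᵒᵖ,𝒜) ⥤ 𝒜).leftDerived n)(T). -/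
/-!
STATEMENT 5: For a simplicial set `X` and a contravariant Gabriel–Zisman natural system
`T : (Δ/X)ᵒᵖ ⥤ 𝒜` with values in a cocomplete abelian category `𝒜` with exact
coproducts (AB4) such that `Fun((Δ/X)ᵒᵖ, 𝒜)` has enough projectives, the `n`-th
Gabriel–Zisman homology of `X` with coefficients in `T` is the `n`-th left derived
functor of the colimit functor applied to `T`:
`H_n^{GZ}(X, T) ≅ colim_n^{(Δ/X)ᵒᵖ} T`.
-/

open CategoryTheory CategoryTheory.Limits Opposite Simplicial

universe v u

namespace GZ

variable {𝒜 : Type u} [Category.{v} 𝒜] [HasColimits 𝒜]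

/-- The simplex category `Δ/X` of a simplicial set `X`, realized as the opposite of
the category of elements of `X`. -/
abbrev SimplexCat (X : SSet.{v}) : Type v := X.Elementsᵒᵖ

/-- The object of `Δ/X` corresponding to a simplex `σ ∈ X_n`. -/
abbrev elt (X : SSet.{v}) {n : SimplexCategoryᵒᵖ} (σ : X.obj n) : SimplexCat X :=
  op (X.elementsMk n σ)

/-- The morphism of `Δ/X` from `X(θ)(σ)` to `σ` determined by `θ`. -/
abbrev eltHom (X : SSet.{v}) {n m : SimplexCategoryᵒᵖ} (θ : n ⟶ m) (σ : X.obj n) :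
    elt X (X.map θ σ) ⟶ elt X σ :=
  Quiver.Hom.op (CategoryOfElements.homMk (X.elementsMk n σ) (X.elementsMk m (X.map θ σ)) θ rfl)

/-- The projection functor `P_X : Δ/X ⥤ Δ`. -/
def proj (X : SSet.{v}) : SimplexCat X ⥤ SimplexCategory :=
  (CategoryOfElements.π X).leftOp

instance (priority := 100) smallColimits : HasColimitsOfSize.{0, v} 𝒜 :=
  hasColimitsOfSizeShrink.{0, v, v, v} 𝒜

lemma corep_aux (X : SSet.{v}) (T : (SimplexCat X)ᵒᵖ ⥤ 𝒜) {u w : SimplexCategoryᵒᵖ}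
    (g : u ⟶ w) (σ : X.obj u) (b : X.obj w) (h : X.map g σ = b) :
    T.map ((Quiver.Hom.op (CategoryOfElements.homMk (X.elementsMk u σ)
          (X.elementsMk w b) g h)).op) ≫
        Sigma.ι (fun τ : X.obj w => T.obj (op (elt X τ))) b =
      T.map ((eltHom X g σ).op) ≫
        Sigma.ι (fun τ : X.obj w => T.obj (op (elt X τ))) (X.map g σ) := by
  subst h; rfl

/-- The simplicial replacement of a contravariant Gabriel–Zisman natural system
`T : (Δ/X)ᵒᵖ ⥤ 𝒜`: in degree `n` it is the coproduct `⊕_{σ ∈ X_n} T(σ)`. -/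
@[simps!]
noncomputable def corep (X : SSet.{v}) (T : (SimplexCat X)ᵒᵖ ⥤ 𝒜) : SimplicialObject 𝒜 where
  obj u := ∐ fun σ : X.obj u => T.obj (op (elt X σ))
  map {u v} θ := Sigma.desc fun σ : X.obj u =>
    T.map ((eltHom X θ σ).op) ≫ Sigma.ι (fun τ : X.obj v => T.obj (op (elt X τ))) (X.map θ σ)
  map_id u := by
    ext σ
    simp only [colimit.ι_desc, Cofan.mk_ι_app, Category.comp_id, op_id]
    have h : X.map (𝟙 u) σ = σ := by simp
    rw [← corep_aux X T (𝟙 u) σ σ h]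
    have e : (CategoryOfElements.homMk (X.elementsMk u σ) (X.elementsMk u σ)
        (𝟙 u) h) = 𝟙 _ := CategoryOfElements.ext X _ _ rfl
    rw [e, op_id, op_id, T.map_id, Category.id_comp]
  map_comp {u v w} θ θ' := by
    ext σ
    rw [← Category.assoc, colimit.ι_desc]
    simp only [Cofan.mk_ι_app, colimit.ι_desc, Category.assoc, colimit.ι_desc_assoc]
    rw [← Category.assoc, ← T.map_comp, ← op_comp]
    have h : X.map (θ ≫ θ') σ = X.map θ' (X.map θ σ) := by
      rw [FunctorToTypes.map_comp_apply]
    rw [← corep_aux X T (θ ≫ θ') σ _ h]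
    congr 1

end GZ

namespace GZ

variable {𝒜 : Type u} [Category.{v} 𝒜] [HasColimits 𝒜]

/-- The Gabriel–Zisman chain complex `C^{GZ}_*(X, T)`. -/
noncomputable def chainComplexGZ [Preadditive 𝒜] (X : SSet.{v})
    (T : (SimplexCat X)ᵒᵖ ⥤ 𝒜) : ChainComplex 𝒜 ℕ :=
  (AlgebraicTopology.alternatingFaceMapComplex 𝒜).obj (corep X T)

end GZ

namespace GZ
universe v₁ u₁ v₂ u₂

section Abs
variable {B : Type u₁} [Category.{v₁} B] [Abelian B] 
  {A : Type u₂} [Category.{v₂} A] [Abelian A]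

noncomputable def sesOp (P : ChainComplex B ℕ) (n : ℕ) : ShortComplex B :=
  ShortComplex.mk (P.fromOpcycles (n+1) n) (P.pOpcycles n) (by
    rw [← cancel_epi (P.pOpcycles (n+1))]; simp)

lemma sesOp_exact (P : ChainComplex B ℕ) (n : ℕ) (h : P.ExactAt (n+1)) :
    (sesOp P n).ShortExact := by
  have h1 : (ShortComplex.mk (P.d (n+1) n) (P.pOpcycles n) (by simp)).Exact :=
    ShortComplex.exact_of_g_is_cokernel _ (P.opcyclesIsCokernel (n+1) n (by simp))
  let φ : ShortComplex.mk (P.d (n+1) n) (P.pOpcycles n) (by simp) ⟶ sesOp P n :=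
    { τ₁ := P.pOpcycles (n+1)
      τ₂ := 𝟙 _
      τ₃ := 𝟙 _
      comm₁₂ := by simp [sesOp]
      comm₂₃ := by simp [sesOp] }
  have : Epi φ.τ₁ := inferInstanceAs (Epi (P.pOpcycles (n+1)))
  have : IsIso φ.τ₂ := inferInstanceAs (IsIso (𝟙 (P.X n)))
  have : Mono φ.τ₃ := inferInstanceAs (Mono (𝟙 (P.opcycles n)))
  have hex := (ShortComplex.exact_iff_of_epi_of_isIso_of_mono φ).1 h1
  have : Mono (sesOp P n).f := by
    have hz : IsZero (P.homology (n+1)) := by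
      rwa [← HomologicalComplex.exactAt_iff_isZero_homology]
    exact Preadditive.mono_of_isZero_kernel' _ (P.homologyIsKernel (n+1) n (by simp)) hz
  have : Epi (sesOp P n).g := by dsimp [sesOp]; infer_instance
  exact { exact := hex }

lemma abs_main [EnoughProjectives B] (CF : B ⥤ ChainComplex A ℕ) [CF.PreservesZeroMorphisms]
    (F : B ⥤ A) [F.Additive] [PreservesFiniteColimits F]
    (e0 : CF ⋙ HomologicalComplex.homologyFunctor A _ 0 ≅ F)
    (hses : ∀ S : ShortComplex B, S.ShortExact → (S.map CF).ShortExact)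
    (hproj : ∀ (P : B) [Projective P] (n : ℕ), IsZero ((CF.obj P).homology (n+1)))
    (T : B) (n : ℕ) :
    Nonempty ((CF.obj T).homology n ≅ (F.leftDerived n).obj T) := by
  obtain _ | n := n
  · exact ⟨e0.app T ≪≫ (F.leftDerivedZeroIsoSelf.app T).symm⟩
  let P := ProjectiveResolution.of T
  have hS (i : ℕ) := hses _ (sesOp_exact P.complex i (P.complex_exactAt_succ i))
  have shift (k : ℕ) : ∀ i, Nonempty ((CF.obj (P.complex.opcycles i)).homology (k+1) ≅
      (CF.obj (P.complex.opcycles (i+k))).homology 1) := by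
    induction k with
    | zero => intro i; exact ⟨Iso.refl _⟩
    | succ k ih =>
      intro i
      obtain ⟨e⟩ := ih (i+1)
      have hij : (ComplexShape.down ℕ).Rel (k+1+1) (k+1) := by simp
      let e1 := (hS i).δIso (k+1+1) (k+1) hij (hproj (P.complex.X _) _) (hproj (P.complex.X _) _)
      have : i + 1 + k = i + (k+1) := by omega
      rw [this] at e
      exact ⟨e1 ≪≫ e⟩
  obtain ⟨e1⟩ := shift n 0
  rw [zero_add] at e1
  let eT : P.complex.opcycles 0 ≅ T :=
    (P.complex.opcyclesIsCokernel 1 0 (by simp)).coconePointUniqueUpToIso P.isColimitCokernelCofork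
  let e2 : (CF.obj T).homology (n+1) ≅ (CF.obj (P.complex.opcycles n)).homology 1 :=
    (CF ⋙ HomologicalComplex.homologyFunctor A _ (n+1)).mapIso eT.symm ≪≫ e1
  -- H_1 as a kernel
  have hij : (ComplexShape.down ℕ).Rel 1 0 := by simp
  have hex := (hS n).homology_exact₁ 1 0 hij
  have hm : Mono ((hS n).δ 1 0 hij) := (hS n).mono_δ 1 0 hij (hproj (P.complex.X _) _)
  let e3 : (CF.obj (P.complex.opcycles n)).homology 1 ≅
      kernel ((CF ⋙ HomologicalComplex.homologyFunctor A _ 0).map (P.complex.fromOpcycles (n+1) n)) :=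
    IsLimit.conePointUniqueUpToIso (hex.fIsKernel) (limit.isLimit _)
  let e4 : kernel ((CF ⋙ HomologicalComplex.homologyFunctor A _ 0).map (P.complex.fromOpcycles (n+1) n))
      ≅ kernel (F.map (P.complex.fromOpcycles (n+1) n)) :=
    kernel.mapIso _ _ (e0.app _) (e0.app _) (e0.hom.naturality _)
  let Q := (F.mapHomologicalComplex _).obj P.complex
  have hc : IsColimit (CokernelCofork.ofπ (f := Q.d (n+2) (n+1)) (F.map (P.complex.pOpcycles (n+1))) (by
      refine (F.map_comp _ _).symm.trans ?_
      simp
      rfl)) :=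
    CokernelCofork.mapIsColimit _ (P.complex.opcyclesIsCokernel (n+2) (n+1) (by simp)) F
  let e5 : Q.opcycles (n+1) ≅ F.obj (P.complex.opcycles (n+1)) :=
    (Q.opcyclesIsCokernel (n+2) (n+1) (by simp)).coconePointUniqueUpToIso hc
  have h5 : Q.pOpcycles (n+1) ≫ e5.hom = F.map (P.complex.pOpcycles (n+1)) :=
    IsColimit.comp_coconePointUniqueUpToIso_hom (Q.opcyclesIsCokernel (n+2) (n+1) (by simp)) hc
      WalkingParallelPair.one
  let e6 : kernel (Q.fromOpcycles (n+1) n) ≅ kernel (F.map (P.complex.fromOpcycles (n+1) n)) :=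
    kernel.mapIso _ _ e5 (Iso.refl _) (by
      rw [← cancel_epi (Q.pOpcycles (n+1)), reassoc_of% h5]
      refine Eq.trans ?_ (F.map_comp _ _)
      rw [HomologicalComplex.p_fromOpcycles]
      erw [Category.comp_id]
      exact Q.p_fromOpcycles _ _)
  let e7 : Q.homology (n+1) ≅ kernel (Q.fromOpcycles (n+1) n) :=
    IsLimit.conePointUniqueUpToIso (Q.homologyIsKernel (n+1) n (by simp)) (limit.isLimit _)
  exact ⟨e2 ≪≫ e3 ≪≫ e4 ≪≫ e6.symm ≪≫ e7.symm ≪≫ (P.isoLeftDerivedObj F (n+1)).symm⟩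
end Abs
end GZ
namespace GZ

section Corep

lemma d_comp_iff {𝒜 : Type u} [Category.{v} 𝒜] [Preadditive 𝒜] (Y : SimplicialObject 𝒜) {Z : 𝒜}
    (f : Y.obj (op ⦋0⦌) ⟶ Z) :
    (((AlgebraicTopology.alternatingFaceMapComplex 𝒜).obj Y).d 1 0 ≫
      (f : ((AlgebraicTopology.alternatingFaceMapComplex 𝒜).obj Y).X 0 ⟶ Z) = 0) ↔
      Y.δ 0 ≫ f = Y.δ 1 ≫ f := by
  have h1 : AlgebraicTopology.AlternatingFaceMapComplex.objD Y 0 = Y.δ 0 - Y.δ 1 := by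
    simp [AlgebraicTopology.AlternatingFaceMapComplex.objD, Fin.sum_univ_two, sub_eq_add_neg]
  have h2 := AlgebraicTopology.alternatingFaceMapComplex_obj_d Y 0
  have h3 : ((AlgebraicTopology.alternatingFaceMapComplex 𝒜).obj Y).d 1 0 ≫
      (f : ((AlgebraicTopology.alternatingFaceMapComplex 𝒜).obj Y).X 0 ⟶ Z) =
      Y.δ 0 ≫ f - Y.δ 1 ≫ f := by
    rw [← Preadditive.sub_comp, ← h1]
    exact congrArg (fun (t : Y.obj (op ⦋1⦌) ⟶ Y.obj (op ⦋0⦌)) => t ≫ f) h2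
  constructor
  · intro h
    exact sub_eq_zero.1 (h3.symm.trans h)
  · intro h
    exact h3.trans (sub_eq_zero.2 h)

def v0 (u : SimplexCategoryᵒᵖ) : u ⟶ op ⦋0⦌ := (SimplexCategory.const ⦋0⦌ u.unop 0).op

lemma edge {u : SimplexCategoryᵒᵖ} (a b : u ⟶ op ⦋0⦌)
    (h : a.unop.toOrderHom 0 ≤ b.unop.toOrderHom 0) :
    ∃ e : u ⟶ op ⦋1⦌, a = e ≫ (SimplexCategory.δ 1).op ∧ b = e ≫ (SimplexCategory.δ 0).op := by
  let e : (⦋1⦌ : SimplexCategory) ⟶ u.unop := SimplexCategory.mkOfLe _ _ h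
  refine ⟨e.op, ?_, ?_⟩
  · apply Quiver.Hom.unop_inj
    ext i
    fin_cases i
    rfl
  · apply Quiver.Hom.unop_inj
    ext i
    fin_cases i
    rfl

lemma map_indep {𝒜 : Type u} [Category.{v} 𝒜] (Y : SimplicialObject 𝒜) {Z : 𝒜}
    (f : Y.obj (op ⦋0⦌) ⟶ Z)
    (hf : Y.δ 0 ≫ f = Y.δ 1 ≫ f) {u : SimplexCategoryᵒᵖ} (a b : u ⟶ op ⦋0⦌) :
    Y.map a ≫ f = Y.map b ≫ f := by
  wlog h : a.unop.toOrderHom 0 ≤ b.unop.toOrderHom 0 generalizing a b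
  · exact (this b a (le_of_not_ge h)).symm
  obtain ⟨e, rfl, rfl⟩ := edge a b h
  simp only [Functor.map_comp, Category.assoc]
  exact congrArg (fun t => Y.map e ≫ t) hf.symm

variable {𝒜 : Type u} [Category.{v} 𝒜] [HasColimits 𝒜] (X : SSet.{v})

noncomputable def cι (T : (SimplexCat X)ᵒᵖ ⥤ 𝒜) {u : SimplexCategoryᵒᵖ} (σ : X.obj u) :
    T.obj (op (elt X σ)) ⟶ (corep X T).obj u :=
  Sigma.ι (fun σ : X.obj u => T.obj (op (elt X σ))) σ

noncomputable def cdesc (T : (SimplexCat X)ᵒᵖ ⥤ 𝒜) {u : SimplexCategoryᵒᵖ} {Z : 𝒜}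
    (f : ∀ σ : X.obj u, T.obj (op (elt X σ)) ⟶ Z) : (corep X T).obj u ⟶ Z :=
  Sigma.desc f

lemma cι_desc (T : (SimplexCat X)ᵒᵖ ⥤ 𝒜) {u : SimplexCategoryᵒᵖ} {Z : 𝒜}
    (f : ∀ σ : X.obj u, T.obj (op (elt X σ)) ⟶ Z) (σ : X.obj u) :
    cι X T σ ≫ cdesc X T f = f σ :=
  Sigma.ι_desc _ _

lemma cι_desc_assoc (T : (SimplexCat X)ᵒᵖ ⥤ 𝒜) {u : SimplexCategoryᵒᵖ} {Z : 𝒜}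
    (f : ∀ σ : X.obj u, T.obj (op (elt X σ)) ⟶ Z) (σ : X.obj u) {W : 𝒜} (h : Z ⟶ W) :
    cι X T σ ≫ cdesc X T f ≫ h = f σ ≫ h := by
  rw [← Category.assoc, cι_desc]

variable {X} in
lemma corep_hom_ext {T : (SimplexCat X)ᵒᵖ ⥤ 𝒜} {u : SimplexCategoryᵒᵖ} {Z : 𝒜}
    {f g : (corep X T).obj u ⟶ Z} (h : ∀ σ : X.obj u, cι X T σ ≫ f = cι X T σ ≫ g) : f = g :=
  Sigma.hom_ext _ _ h

lemma cι_map (T : (SimplexCat X)ᵒᵖ ⥤ 𝒜) {u w : SimplexCategoryᵒᵖ} (θ : u ⟶ w) (σ : X.obj u) :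
    cι X T σ ≫ (corep X T).map θ = T.map ((eltHom X θ σ).op) ≫ cι X T (X.map θ σ) :=
  Sigma.ι_desc _ _

lemma cι_map_assoc (T : (SimplexCat X)ᵒᵖ ⥤ 𝒜) {u w : SimplexCategoryᵒᵖ} (θ : u ⟶ w) (σ : X.obj u)
    {W : 𝒜} (h : (corep X T).obj w ⟶ W) :
    cι X T σ ≫ (corep X T).map θ ≫ h =
      T.map ((eltHom X θ σ).op) ≫ cι X T (X.map θ σ) ≫ h := by
  rw [← Category.assoc, cι_map, Category.assoc]

lemma map_cι (T : (SimplexCat X)ᵒᵖ ⥤ 𝒜) {p q : X.Elements} (g : p ⟶ q) :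
    T.map g.op.op ≫ cι X T (u := q.1) q.2 = cι X T (u := p.1) p.2 ≫ (corep X T).map g.val := by
  rw [cι_map]
  exact corep_aux X T g.val p.2 q.2 g.property

lemma map_cι_assoc (T : (SimplexCat X)ᵒᵖ ⥤ 𝒜) {p q : X.Elements} (g : p ⟶ q)
    {W : 𝒜} (h : (corep X T).obj q.1 ⟶ W) :
    T.map g.op.op ≫ cι X T (u := q.1) q.2 ≫ h =
      cι X T (u := p.1) p.2 ≫ (corep X T).map g.val ≫ h := by
  have := congrArg (fun t => t ≫ h) (map_cι X T g)
  exact (Category.assoc _ _ _).symm.trans (this.trans (Category.assoc _ _ _))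

noncomputable def corepApp {T T' : (SimplexCat X)ᵒᵖ ⥤ 𝒜} (α : T ⟶ T') (u : SimplexCategoryᵒᵖ) :
    (corep X T).obj u ⟶ (corep X T').obj u :=
  cdesc X T (fun σ => α.app _ ≫ cι X T' σ)

lemma cι_app {T T' : (SimplexCat X)ᵒᵖ ⥤ 𝒜} (α : T ⟶ T') {u : SimplexCategoryᵒᵖ} (σ : X.obj u) :
    cι X T σ ≫ corepApp X α u = α.app _ ≫ cι X T' σ := cι_desc _ _ _ _

lemma cι_app_assoc {T T' : (SimplexCat X)ᵒᵖ ⥤ 𝒜} (α : T ⟶ T') {u : SimplexCategoryᵒᵖ}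
    (σ : X.obj u) {W : 𝒜} (h : (corep X T').obj u ⟶ W) :
    cι X T σ ≫ corepApp X α u ≫ h = α.app _ ≫ cι X T' σ ≫ h := by
  rw [← Category.assoc, cι_app, Category.assoc]

noncomputable def corepF : ((SimplexCat X)ᵒᵖ ⥤ 𝒜) ⥤ SimplicialObject 𝒜 where
  obj T := corep X T
  map {T T'} α :=
    { app := fun u => corepApp X α u
      naturality := fun u w θ => by
        apply corep_hom_ext
        intro σ
        rw [cι_map_assoc, cι_app, cι_app_assoc, cι_map]
        simp }
  map_id T := by
    ext u : 2
    apply corep_hom_ext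
    intro σ
    erw [cι_app, Category.comp_id]
    simp
  map_comp α β := by
    ext u : 2
    apply corep_hom_ext
    intro σ
    refine (cι_app _ _ _).trans ?_
    refine Eq.trans ?_ (cι_app_assoc _ _ _ _).symm
    rw [cι_app]
    simp

noncomputable def CF [Preadditive 𝒜] : ((SimplexCat X)ᵒᵖ ⥤ 𝒜) ⥤ ChainComplex 𝒜 ℕ :=
  corepF X ⋙ AlgebraicTopology.alternatingFaceMapComplex 𝒜

lemma CF_map_f [Preadditive 𝒜] {T T' : (SimplexCat X)ᵒᵖ ⥤ 𝒜} (α : T ⟶ T') (n : ℕ) :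
    ((CF X).map α).f n = corepApp X α (op ⦋n⦌) := rfl

instance [Preadditive 𝒜] : (CF (𝒜 := 𝒜) X).PreservesZeroMorphisms where
  map_zero T T' := by
    ext n
    rw [CF_map_f]
    apply corep_hom_ext
    intro σ
    refine (cι_app _ _ _).trans ?_
    exact zero_comp.trans comp_zero.symm

noncomputable def evF (u : SimplexCategoryᵒᵖ) : ((SimplexCat X)ᵒᵖ ⥤ 𝒜) ⥤ 𝒜 :=
  (Functor.whiskeringLeft (Discrete (X.obj u)) _ 𝒜).obj
    (Discrete.functor (fun σ => op (elt X σ))) ⋙ colim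

noncomputable def evFIsoApp (u : SimplexCategoryᵒᵖ) (T : (SimplexCat X)ᵒᵖ ⥤ 𝒜) :
    colimit (Discrete.functor (fun σ : X.obj u => op (elt X σ)) ⋙ T) ≅ (corep X T).obj u :=
  HasColimit.isoOfNatIso (Discrete.natIso fun _ => Iso.refl _)

lemma ι_evFIsoApp (u : SimplexCategoryᵒᵖ) (T : (SimplexCat X)ᵒᵖ ⥤ 𝒜) (σ : X.obj u) :
    colimit.ι (Discrete.functor (fun σ : X.obj u => op (elt X σ)) ⋙ T) ⟨σ⟩ ≫
      (evFIsoApp X u T).hom = cι X T σ :=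
  (HasColimit.isoOfNatIso_ι_hom _ _).trans (Category.id_comp _)

lemma ι_evFIsoApp_assoc (u : SimplexCategoryᵒᵖ) (T : (SimplexCat X)ᵒᵖ ⥤ 𝒜) (σ : X.obj u)
    {W : 𝒜} (h : (corep X T).obj u ⟶ W) :
    colimit.ι (Discrete.functor (fun σ : X.obj u => op (elt X σ)) ⋙ T) ⟨σ⟩ ≫
      (evFIsoApp X u T).hom ≫ h = cι X T σ ≫ h := by
  rw [← Category.assoc, ι_evFIsoApp]

noncomputable def evFIso (u : SimplexCategoryᵒᵖ) :
    evF (𝒜 := 𝒜) X u ≅ corepF X ⋙ (evaluation _ _).obj u :=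
  NatIso.ofComponents (fun T => evFIsoApp X u T)
    (fun {T T'} α => by
      apply colimit.hom_ext
      rintro ⟨σ⟩
      refine ((colimit.ι_desc_assoc _ _ _).trans ?_).trans (ι_evFIsoApp_assoc X u T σ _).symm
      refine Eq.trans ?_ (cι_app X α σ).symm
      refine (Category.assoc _ _ _).trans ?_
      erw [ι_evFIsoApp]
      rfl)

lemma CF_ses [Abelian 𝒜] [AB4 𝒜] (S : ShortComplex ((SimplexCat X)ᵒᵖ ⥤ 𝒜)) (hS : S.ShortExact) :
    (S.map (CF X)).ShortExact := by
  apply HomologicalComplex.shortExact_of_degreewise_shortExact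
  intro n
  have : PreservesFiniteLimits (colim (J := Discrete (X.obj (op ⦋n⦌))) (C := 𝒜)) :=
    HasExactColimitsOfShape.preservesFiniteLimits
  have h1 : PreservesFiniteLimits (evF (𝒜 := 𝒜) X (op ⦋n⦌)) := by
    unfold evF; infer_instance
  have h2 : PreservesFiniteColimits (evF (𝒜 := 𝒜) X (op ⦋n⦌)) := by
    unfold evF; infer_instance
  have h3 := preservesFiniteLimits_of_natIso (evFIso (𝒜 := 𝒜) X (op ⦋n⦌))
  have h4 := preservesFiniteColimits_of_natIso (evFIso (𝒜 := 𝒜) X (op ⦋n⦌))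
  exact hS.map_of_exact (corepF X ⋙ (evaluation _ _).obj (op ⦋n⦌))

/-! ### H_0 -/

noncomputable def aug (T : (SimplexCat X)ᵒᵖ ⥤ 𝒜) (u : SimplexCategoryᵒᵖ) :
    (corep X T).obj u ⟶ colimit T :=
  cdesc X T (fun σ => colimit.ι T (op (elt X σ)))

lemma map_aug (T : (SimplexCat X)ᵒᵖ ⥤ 𝒜) {u w : SimplexCategoryᵒᵖ} (θ : u ⟶ w) :
    (corep X T).map θ ≫ aug X T w = aug X T u := by
  apply corep_hom_ext
  intro σ
  rw [cι_map_assoc]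
  simp [aug, cι_desc]

lemma map_aug_assoc (T : (SimplexCat X)ᵒᵖ ⥤ 𝒜) {u w : SimplexCategoryᵒᵖ} (θ : u ⟶ w)
    {W : 𝒜} (h : colimit T ⟶ W) :
    (corep X T).map θ ≫ aug X T w ≫ h = aug X T u ≫ h := by
  rw [← Category.assoc, map_aug]

noncomputable def cocone0 (T : (SimplexCat X)ᵒᵖ ⥤ 𝒜) {Z : 𝒜} (f : (corep X T).obj (op ⦋0⦌) ⟶ Z)
    (hf : (corep X T).δ 0 ≫ f = (corep X T).δ 1 ≫ f) : Cocone T where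
  pt := Z
  ι :=
    { app := fun k => cι X T (u := k.unop.unop.1) k.unop.unop.2 ≫ (corep X T).map (v0 _) ≫ f
      naturality := fun k k' g => by
        refine (map_cι_assoc X T (p := k.unop.unop) (q := k'.unop.unop) g.unop.unop _).trans ?_
        rw [← Functor.map_comp_assoc,
          map_indep _ f hf (g.unop.unop.val ≫ v0 _) (v0 _)]
        exact (Category.comp_id _).symm }

lemma d_aug (T : (SimplexCat X)ᵒᵖ ⥤ 𝒜) [Preadditive 𝒜] :
    ((CF X).obj T).d 1 0 ≫ (aug X T (op ⦋0⦌) : ((CF X).obj T).X 0 ⟶ colimit T) = 0 :=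
  (d_comp_iff (corep X T) _).2 ((map_aug X T _).trans (map_aug X T _).symm)

lemma v0_zero : v0 (op ⦋0⦌) = 𝟙 _ := by
  apply Quiver.Hom.unop_inj
  ext i
  fin_cases i
  rfl

noncomputable def augIsColimit (T : (SimplexCat X)ᵒᵖ ⥤ 𝒜) [Preadditive 𝒜] :
    IsColimit (CokernelCofork.ofπ _ (d_aug X T)) :=
  CokernelCofork.IsColimit.ofπ _ _
    (fun f hf => colimit.desc T (cocone0 X T f ((d_comp_iff (corep X T) f).1 hf)))
    (fun f hf => by
      apply corep_hom_ext
      intro σ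
      refine (cι_desc_assoc _ _ _ _ _).trans ?_
      refine (colimit.ι_desc _ _).trans ?_
      change cι X T σ ≫ (corep X T).map (v0 _) ≫ f = _
      refine congrArg (fun t => cι X T σ ≫ t) ?_
      refine Eq.trans (congrArg (fun t => (corep X T).map t ≫ f) v0_zero) ?_
      refine Eq.trans (congrArg (fun t => t ≫ f) ((corep X T).map_id _)) ?_
      exact Category.id_comp f)
    (fun f hf m hm => by
      apply colimit.hom_ext
      intro k
      subst hm
      refine Eq.trans ?_ (colimit.ι_desc (cocone0 X T _ _) k).symm
      refine Eq.trans ?_ (congrArg (fun t => cι X T (u := k.unop.unop.1) k.unop.unop.2 ≫ t)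
        (map_aug_assoc X T (v0 _) m).symm)
      exact (cι_desc_assoc X T (u := k.unop.unop.1) (fun σ => colimit.ι T (op (elt X σ)))
        k.unop.unop.2 m).symm)

noncomputable def opcIso [Abelian 𝒜] (T : (SimplexCat X)ᵒᵖ ⥤ 𝒜) :
    ((CF X).obj T).opcycles 0 ≅ colimit T :=
  (((CF X).obj T).opcyclesIsCokernel 1 0 (by simp)).coconePointUniqueUpToIso (augIsColimit X T)

lemma p_opcIso [Abelian 𝒜] (T : (SimplexCat X)ᵒᵖ ⥤ 𝒜) :
    ((CF X).obj T).pOpcycles 0 ≫ (opcIso X T).hom = aug X T (op ⦋0⦌) :=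
  IsColimit.comp_coconePointUniqueUpToIso_hom
    (((CF X).obj T).opcyclesIsCokernel 1 0 (by simp)) _ WalkingParallelPair.one

lemma p_opcIso_assoc [Abelian 𝒜] (T : (SimplexCat X)ᵒᵖ ⥤ 𝒜) {W : 𝒜} (h : colimit T ⟶ W) :
    ((CF X).obj T).pOpcycles 0 ≫ (opcIso X T).hom ≫ h =
      (aug X T (op ⦋0⦌) ≫ h : (corep X T).obj (op ⦋0⦌) ⟶ W) := by
  have := congrArg (fun t => t ≫ h) (p_opcIso X T)
  exact (Category.assoc _ _ _).symm.trans this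

lemma opcIso_nat [Abelian 𝒜] {T T' : (SimplexCat X)ᵒᵖ ⥤ 𝒜} (α : T ⟶ T') :
    HomologicalComplex.opcyclesMap ((CF X).map α) 0 ≫ (opcIso X T').hom =
      (opcIso X T).hom ≫ colimMap α := by
  rw [← cancel_epi (((CF X).obj T).pOpcycles 0), HomologicalComplex.p_opcyclesMap_assoc,
    p_opcIso, p_opcIso_assoc]
  apply corep_hom_ext
  intro σ
  refine (cι_app_assoc X α σ _).trans ?_
  refine Eq.trans ?_ (cι_desc_assoc X T _ _ _).symm
  refine Eq.trans (congrArg (fun t => _ ≫ t) (cι_desc X T' _ _)) ?_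
  exact (ι_colimMap α _).symm

noncomputable def H0iso [Abelian 𝒜] :
    CF (𝒜 := 𝒜) X ⋙ HomologicalComplex.homologyFunctor 𝒜 _ 0 ≅ colim :=
  NatIso.ofComponents (fun T => ChainComplex.isoHomologyι₀ ((CF X).obj T) ≪≫ opcIso X T)
    (fun {T T'} α => by
      change HomologicalComplex.homologyMap ((CF X).map α) 0 ≫
        (ChainComplex.isoHomologyι₀ ((CF X).obj T')).hom ≫ (opcIso X T').hom =
        ((ChainComplex.isoHomologyι₀ ((CF X).obj T)).hom ≫ (opcIso X T).hom) ≫ colimMap α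
      rw [Category.assoc, ← opcIso_nat]
      simp)

end Corep
end GZ

namespace GZ

section Acyc

variable {𝒜 : Type u} [Category.{v} 𝒜] [HasColimits 𝒜] (X : SSet.{v})

/-- The index set for the standard projective-like cover. -/
abbrev GIdx (k : X.Elements) : Type v := Σ τ : X.Elements, (τ ⟶ k)

variable {X} in
noncomputable def gObj (T : (SimplexCat X)ᵒᵖ ⥤ 𝒜) (k : X.Elements) : 𝒜 :=
  ∐ fun f : GIdx X k => T.obj (op (op f.1))

variable {X} in
noncomputable def gι (T : (SimplexCat X)ᵒᵖ ⥤ 𝒜) {τ k : X.Elements} (f : τ ⟶ k) :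
    T.obj (op (op τ)) ⟶ gObj T k :=
  Sigma.ι (fun f : GIdx X k => T.obj (op (op f.1))) ⟨τ, f⟩

variable {X} in
noncomputable def gdesc (T : (SimplexCat X)ᵒᵖ ⥤ 𝒜) {k : X.Elements} {Z : 𝒜}
    (φ : ∀ τ : X.Elements, (τ ⟶ k) → (T.obj (op (op τ)) ⟶ Z)) : gObj T k ⟶ Z :=
  Sigma.desc fun f => φ f.1 f.2

variable {X} in
lemma gι_desc (T : (SimplexCat X)ᵒᵖ ⥤ 𝒜) {k : X.Elements} {Z : 𝒜}
    (φ : ∀ τ : X.Elements, (τ ⟶ k) → (T.obj (op (op τ)) ⟶ Z)) {τ : X.Elements} (f : τ ⟶ k) :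
    gι T f ≫ gdesc T φ = φ τ f :=
  Sigma.ι_desc _ _

variable {X} in
lemma gι_desc_assoc (T : (SimplexCat X)ᵒᵖ ⥤ 𝒜) {k : X.Elements} {Z : 𝒜}
    (φ : ∀ τ : X.Elements, (τ ⟶ k) → (T.obj (op (op τ)) ⟶ Z)) {τ : X.Elements} (f : τ ⟶ k)
    {W : 𝒜} (h : Z ⟶ W) :
    gι T f ≫ gdesc T φ ≫ h = φ τ f ≫ h := by
  rw [← Category.assoc, gι_desc]

variable {X} in
lemma g_hom_ext {T : (SimplexCat X)ᵒᵖ ⥤ 𝒜} {k : X.Elements} {Z : 𝒜} {a b : gObj T k ⟶ Z}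
    (h : ∀ (τ : X.Elements) (f : τ ⟶ k), gι T f ≫ a = gι T f ≫ b) : a = b :=
  Sigma.hom_ext _ _ fun f => h f.1 f.2

noncomputable def G (T : (SimplexCat X)ᵒᵖ ⥤ 𝒜) : (SimplexCat X)ᵒᵖ ⥤ 𝒜 where
  obj k := gObj T k.unop.unop
  map {k k'} g := gdesc T fun τ f => gι T (f ≫ g.unop.unop)
  map_id k := by
    apply g_hom_ext
    intro τ f
    rw [gι_desc]
    simp
  map_comp g g' := by
    apply g_hom_ext
    intro τ f
    rw [gι_desc, gι_desc_assoc, gι_desc]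
    simp

lemma gι_map (T : (SimplexCat X)ᵒᵖ ⥤ 𝒜) {τ k k' : X.Elements} (f : τ ⟶ k) (g : k ⟶ k') :
    gι T f ≫ (G X T).map g.op.op = gι T (f ≫ g) :=
  gι_desc T (fun _ f => gι T (f ≫ g)) f

noncomputable def gε (T : (SimplexCat X)ᵒᵖ ⥤ 𝒜) : G X T ⟶ T where
  app k := gdesc T fun τ f => T.map f.op.op
  naturality k k' g := by
    apply g_hom_ext
    intro τ f
    refine (gι_desc_assoc T (fun _ f => gι T (f ≫ g.unop.unop)) f _).trans ?_
    refine Eq.trans ?_ (gι_desc_assoc T (fun _ f => T.map f.op.op) f (T.map g)).symm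
    rw [gι_desc]
    exact T.map_comp f.op.op g

instance gε_epi (T : (SimplexCat X)ᵒᵖ ⥤ 𝒜) : Epi (gε X T) := by
  have : ∀ k, Epi ((gε X T).app k) := fun k => by
    have h : gι T (𝟙 k.unop.unop) ≫ (gε X T).app k = 𝟙 _ :=
      (gι_desc T (fun _ f => T.map f.op.op) (𝟙 k.unop.unop)).trans (T.map_id _)
    have h2 : IsSplitEpi ((gε X T).app k) := ⟨⟨⟨gι T (𝟙 k.unop.unop), h⟩⟩⟩
    infer_instance
  exact NatTrans.epi_of_epi_app _

noncomputable def gj (T : (SimplexCat X)ᵒᵖ ⥤ 𝒜) (τ : X.Elements) {u : SimplexCategoryᵒᵖ}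
    (θ : τ.1 ⟶ u) : T.obj (op (op τ)) ⟶ (corep X (G X T)).obj u :=
  gι T (k := X.elementsMk u (X.map θ τ.2)) (CategoryOfElements.homMk τ _ θ rfl) ≫
    cι X (G X T) (X.map θ τ.2)

lemma gι_cι (T : (SimplexCat X)ᵒᵖ ⥤ 𝒜) (τ : X.Elements) {u : SimplexCategoryᵒᵖ} (σ : X.obj u)
    (f : τ ⟶ X.elementsMk u σ) :
    gι T f ≫ cι X (G X T) σ = gj X T τ (u := u) f.val := by
  obtain ⟨θ, h⟩ := f
  change τ.1 ⟶ u at θ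
  change X.map θ τ.2 = σ at h
  subst h
  rfl

lemma gj_map (T : (SimplexCat X)ᵒᵖ ⥤ 𝒜) (τ : X.Elements) {u w : SimplexCategoryᵒᵖ}
    (θ : τ.1 ⟶ u) (g : u ⟶ w) :
    gj X T τ θ ≫ (corep X (G X T)).map g = gj X T τ (θ ≫ g) := by
  unfold gj
  refine (Category.assoc _ _ _).trans ?_
  refine (congrArg (fun t => _ ≫ t) (cι_map X (G X T) g (X.map θ τ.2))).trans ?_
  refine (Category.assoc _ _ _).symm.trans ?_
  refine Eq.trans (congrArg (fun t => t ≫ _) (gι_map X T _ _)) ?_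
  exact gι_cι X T τ _ _

lemma gj_map_assoc (T : (SimplexCat X)ᵒᵖ ⥤ 𝒜) (τ : X.Elements) {u w : SimplexCategoryᵒᵖ}
    (θ : τ.1 ⟶ u) (g : u ⟶ w) {W : 𝒜} (h : (corep X (G X T)).obj w ⟶ W) :
    gj X T τ θ ≫ (corep X (G X T)).map g ≫ h = gj X T τ (θ ≫ g) ≫ h := by
  rw [← Category.assoc, gj_map]

variable {X} in
lemma gj_hom_ext {T : (SimplexCat X)ᵒᵖ ⥤ 𝒜} {u : SimplexCategoryᵒᵖ} {Z : 𝒜}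
    {a b : (corep X (G X T)).obj u ⟶ Z}
    (h : ∀ (τ : X.Elements) (θ : τ.1 ⟶ u), gj X T τ θ ≫ a = gj X T τ θ ≫ b) : a = b := by
  apply corep_hom_ext
  intro σ
  apply g_hom_ext
  intro τ f
  refine (Category.assoc _ _ _).symm.trans ?_
  refine Eq.trans ?_ (Category.assoc _ _ _)
  have := h τ f.val
  rw [← gι_cι X T τ σ f] at this
  exact this

noncomputable def gjdesc (T : (SimplexCat X)ᵒᵖ ⥤ 𝒜) {u : SimplexCategoryᵒᵖ} {Z : 𝒜}
    (φ : ∀ τ : X.Elements, (τ.1 ⟶ u) → (T.obj (op (op τ)) ⟶ Z)) :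
    (corep X (G X T)).obj u ⟶ Z :=
  cdesc X (G X T) fun _ => gdesc T fun τ f => φ τ f.val

lemma gj_desc (T : (SimplexCat X)ᵒᵖ ⥤ 𝒜) {u : SimplexCategoryᵒᵖ} {Z : 𝒜}
    (φ : ∀ τ : X.Elements, (τ.1 ⟶ u) → (T.obj (op (op τ)) ⟶ Z)) (τ : X.Elements) (θ : τ.1 ⟶ u) :
    gj X T τ θ ≫ gjdesc X T φ = φ τ θ := by
  unfold gj gjdesc
  refine (Category.assoc _ _ _).trans ?_
  refine (congrArg (fun t => _ ≫ t) (cι_desc X (G X T) _ (X.map θ τ.2))).trans ?_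
  exact gι_desc T (k := X.elementsMk u (X.map θ τ.2)) (fun τ f => φ τ f.val) _

lemma gj_desc_assoc (T : (SimplexCat X)ᵒᵖ ⥤ 𝒜) {u : SimplexCategoryᵒᵖ} {Z : 𝒜}
    (φ : ∀ τ : X.Elements, (τ.1 ⟶ u) → (T.obj (op (op τ)) ⟶ Z)) (τ : X.Elements) (θ : τ.1 ⟶ u)
    {W : 𝒜} (h : Z ⟶ W) :
    gj X T τ θ ≫ gjdesc X T φ ≫ h = φ τ θ ≫ h := by
  rw [← Category.assoc, gj_desc]

noncomputable def gAug (T : (SimplexCat X)ᵒᵖ ⥤ 𝒜) : SimplicialObject.Augmented 𝒜 where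
  left := corep X (G X T)
  right := ∐ fun τ : X.Elements => T.obj (op (op τ))
  hom :=
    { app := fun u => gjdesc X T fun τ _ => Sigma.ι (fun τ : X.Elements => T.obj (op (op τ))) τ
      naturality := fun u w g => by
        apply gj_hom_ext
        intro τ θ
        refine (gj_map_assoc X T τ θ g _).trans ?_
        refine (gj_desc X T _ _ _).trans ?_
        refine Eq.trans ?_ (gj_desc_assoc X T _ _ _ _).symm
        exact (Category.comp_id _).symm }

def gsh {u : SimplexCategoryᵒᵖ} {n : ℕ} (θ : u ⟶ op ⦋n⦌) : u ⟶ op ⦋n + 1⦌ :=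
  (SSet.Augmented.StandardSimplex.shift θ.unop).op

lemma gsh_zero {u : SimplexCategoryᵒᵖ} {n : ℕ} (θ : u ⟶ op ⦋n⦌) :
    gsh θ ≫ (SimplexCategory.δ 0).op = θ := by
  apply Quiver.Hom.unop_inj
  apply SimplexCategory.Hom.ext
  ext i : 2
  rfl

lemma gsh_one {u : SimplexCategoryᵒᵖ} (θ : u ⟶ op ⦋0⦌) :
    gsh θ ≫ (SimplexCategory.δ 1).op = v0 u := by
  apply Quiver.Hom.unop_inj
  apply SimplexCategory.Hom.ext
  ext i : 2
  fin_cases i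
  rfl

lemma gsh_δ {u : SimplexCategoryᵒᵖ} {n : ℕ} (θ : u ⟶ op ⦋n + 1⦌) (i : Fin (n + 2)) :
    gsh θ ≫ (SimplexCategory.δ i.succ).op = gsh (θ ≫ (SimplexCategory.δ i).op) := by
  apply Quiver.Hom.unop_inj
  apply SimplexCategory.Hom.ext
  ext j : 2
  dsimp [gsh, SimplexCategory.δ]
  cases j using Fin.cases <;> simp <;> rfl

lemma gsh_σ {u : SimplexCategoryᵒᵖ} {n : ℕ} (θ : u ⟶ op ⦋n⦌) (i : Fin (n + 1)) :
    gsh θ ≫ (SimplexCategory.σ i.succ).op = gsh (θ ≫ (SimplexCategory.σ i).op) := by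
  apply Quiver.Hom.unop_inj
  apply SimplexCategory.Hom.ext
  ext j : 2
  dsimp [gsh, SimplexCategory.σ]
  cases j using Fin.cases <;> simp <;> rfl

noncomputable def gs (T : (SimplexCat X)ᵒᵖ ⥤ 𝒜) (n : ℕ) :
    (corep X (G X T)).obj (op ⦋n⦌) ⟶ (corep X (G X T)).obj (op ⦋n + 1⦌) :=
  gjdesc X T fun τ θ => gj X T τ (gsh θ)

noncomputable def gs' (T : (SimplexCat X)ᵒᵖ ⥤ 𝒜) :
    (∐ fun τ : X.Elements => T.obj (op (op τ))) ⟶ (corep X (G X T)).obj (op ⦋0⦌) :=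
  Sigma.desc fun τ => gj X T τ (v0 τ.1)

lemma gs_map (T : (SimplexCat X)ᵒᵖ ⥤ 𝒜) {n m : ℕ}
    (a : op ⦋n⦌ ⟶ op ⦋m⦌) (b : op ⦋n + 1⦌ ⟶ op ⦋m + 1⦌)
    (h : ∀ {u : SimplexCategoryᵒᵖ} (θ : u ⟶ op ⦋n⦌), gsh θ ≫ b = gsh (θ ≫ a)) :
    gs X T n ≫ (corep X (G X T)).map b = (corep X (G X T)).map a ≫ gs X T m := by
  apply gj_hom_ext
  intro τ θ
  unfold gs
  rw [gj_desc_assoc, gj_map, gj_map_assoc, gj_desc, h]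

noncomputable def gExtra (T : (SimplexCat X)ᵒᵖ ⥤ 𝒜) :
    SimplicialObject.Augmented.ExtraDegeneracy (gAug X T) where
  s' := gs' X T
  s n := gs X T n
  s'_comp_ε := by
    refine Sigma.hom_ext _ _ fun τ => ?_
    refine (Category.assoc _ _ _).symm.trans ?_
    refine Eq.trans (congrArg (fun t => t ≫ _) (Sigma.ι_desc _ _)) ?_
    refine (gj_desc X T (fun τ _ => Sigma.ι (fun τ : X.Elements => T.obj (op (op τ))) τ)
      τ _).trans ?_
    exact (Category.comp_id _).symm
  s₀_comp_δ₁ := by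
    apply gj_hom_ext
    intro τ θ
    refine (gj_desc_assoc X T _ _ _ _).trans ?_
    refine (gj_map X T _ _ _).trans ?_
    refine Eq.trans ?_ (gj_desc_assoc X T
      (fun τ _ => Sigma.ι (fun τ : X.Elements => T.obj (op (op τ))) τ) τ θ (gs' X T)).symm
    refine Eq.trans ?_ (Sigma.ι_desc (fun τ : X.Elements => gj X T τ (v0 τ.1)) τ).symm
    exact congrArg (fun t => gj X T τ t) (gsh_one θ)
  s_comp_δ₀ n := by
    apply gj_hom_ext
    intro τ θ
    refine (gj_desc_assoc X T _ _ _ _).trans ?_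
    refine (gj_map X T _ _ _).trans ?_
    refine Eq.trans ?_ (Category.comp_id _).symm
    exact congrArg (fun t => gj X T τ t) (gsh_zero θ)
  s_comp_δ n i := gs_map X T _ _ fun θ => gsh_δ θ i
  s_comp_σ n i := gs_map X T _ _ fun θ => gsh_σ θ i

lemma G_acyclic [Abelian 𝒜] (T : (SimplexCat X)ᵒᵖ ⥤ 𝒜) (n : ℕ) :
    IsZero (((CF X).obj (G X T)).homology (n + 1)) := by
  have e := (gExtra X T).homotopyEquiv
  have e2 : ((CF X).obj (G X T)).homology (n + 1) ≅
    ((ChainComplex.single₀ 𝒜).obj (SimplicialObject.Augmented.point.obj (gAug X T))).homology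
      (n + 1) := e.toHomologyIso (n + 1)
  refine IsZero.of_iso ?_ e2
  rw [← HomologicalComplex.exactAt_iff_isZero_homology]
  exact ChainComplex.exactAt_succ_single_obj _ _

lemma proj_acyclic [Abelian 𝒜] (P : (SimplexCat X)ᵒᵖ ⥤ 𝒜) [Projective P] (n : ℕ) :
    IsZero (((CF X).obj P).homology (n + 1)) := by
  have h : Projective.factorThru (𝟙 P) (gε X P) ≫ gε X P = 𝟙 P :=
    Projective.factorThru_comp _ _
  have h2 := congrArg
    (fun t => (CF X ⋙ HomologicalComplex.homologyFunctor 𝒜 _ (n + 1)).map t) h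
  simp only [Functor.map_comp] at h2
  rw [IsZero.iff_id_eq_zero]
  refine (CategoryTheory.Functor.map_id (CF X ⋙ HomologicalComplex.homologyFunctor 𝒜 _ (n + 1))
    P).symm.trans (h2.symm.trans ?_)
  have h3 : (CF X ⋙ HomologicalComplex.homologyFunctor 𝒜 _ (n + 1)).map (gε X P) = 0 :=
    (G_acyclic X P n).eq_of_src _ _
  rw [h3, comp_zero]
  rfl

end Acyc
end GZ

open GZ in
theorem stmt_5 {𝒜 : Type u} [Category.{v} 𝒜] [Abelian 𝒜] [HasColimits 𝒜] [AB4 𝒜]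
    (X : SSet.{v}) [EnoughProjectives ((SimplexCat X)ᵒᵖ ⥤ 𝒜)]
    (T : (SimplexCat X)ᵒᵖ ⥤ 𝒜) (n : ℕ) :
    Nonempty ((chainComplexGZ X T).homology n ≅
      ((Limits.colim (J := (SimplexCat X)ᵒᵖ) (C := 𝒜)).leftDerived n).obj T) := by
  exact abs_main (CF X) colim (H0iso X) (CF_ses X) (fun P _ n => proj_acyclic X P n) T n
end

section
/- Let f : X → Y be a map of simplicial sets, 𝒜 a complete abelian category with exact products, and T : Δ/Y ⥤ 𝒜 a covariant Gabriel–Zisman natural system on Y. Suppose f is locally cohomologically trivial, i.e. for every simplex y : Δ[n] → Y the canonical morphism H^q_GZ(Δ[n], T_{Δ[n]}) → H^q_GZ(F_y, (f^*T)_y), induced by the projection p : F_y → Δ[n] of the pullback square F_y = Δ[n] ×_Y X, is an isomorphism for all q ≥ 0. Then the canonical morphism induced by f, H^q_GZ(Y, T) → H^q_GZ(X, f^*T), is an isomorphism for all q ≥ 0. -/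
/-!
STATEMENT 16: Let `f : X → Y` be a map of simplicial sets, `𝒜` a complete abelian
category with exact products, and `T : Δ/Y ⥤ 𝒜` a covariant Gabriel–Zisman natural
system.  If `f` is locally cohomologically trivial (for every simplex `y : Δ[n] → Y` the
canonical morphism `H^q_GZ(Δ[n], T_{Δ[n]}) → H^q_GZ(F_y, (f^*T)_y)` is an isomorphism for
all `q`), then the canonical morphism `H^q_GZ(Y, T) → H^q_GZ(X, f^*T)` is an isomorphism
for all `q`.  (The canonical morphisms are induced on cohomology by the cochain maps
`(a_σ) ↦ (a_{p∘g})` and `(a_σ) ↦ (a_{f∘x})` respectively, given by the functoriality of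
the Gabriel–Zisman cochain complex.)
-/
open CategoryTheory CategoryTheory.Limits Opposite
universe v u
namespace GZ

variable {𝒜 : Type u} [Category.{v} 𝒜] [HasLimits 𝒜]

lemma rep_aux (X : SSet.{v}) (T : SimplexCat X ⥤ 𝒜) {u w : SimplexCategoryᵒᵖ}
    (g : u ⟶ w) (σ : X.obj u) (b : X.obj w) (h : X.map g σ = b) :
    Pi.π (fun τ : X.obj w => T.obj (elt X τ)) b ≫
        T.map (Quiver.Hom.op (CategoryOfElements.homMk (X.elementsMk u σ) (X.elementsMk w b) g h)) =
      Pi.π (fun τ : X.obj w => T.obj (elt X τ)) (X.map g σ) ≫ T.map (eltHom X g σ) := by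
  subst h; rfl

/-- The cosimplicial replacement `∏* T` of a Gabriel–Zisman natural system `T : Δ/X ⥤ 𝒜`. -/
@[simps!]
noncomputable def rep (X : SSet.{v}) (T : SimplexCat X ⥤ 𝒜) : CosimplicialObject 𝒜 where
  obj n := ∏ᶜ fun σ : X.obj (op n) => T.obj (elt X σ)
  map {n m} θ := Pi.lift fun σ : X.obj (op m) =>
    Pi.π _ (X.map θ.op σ) ≫ T.map (eltHom X θ.op σ)
  map_id n := by
    ext σ
    simp only [limit.lift_π, Fan.mk_π_app, Category.id_comp, op_id]
    have h : X.map (𝟙 (op n)) σ = σ := by simp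
    rw [← rep_aux X T (𝟙 (op n)) σ σ h]
    have e : (CategoryOfElements.homMk (X.elementsMk (op n) σ) (X.elementsMk (op n) σ)
        (𝟙 (op n)) h) = 𝟙 _ := CategoryOfElements.ext X _ _ rfl
    rw [e, op_id, T.map_id, Category.comp_id]
  map_comp {n m k} θ θ' := by
    ext σ
    simp only [Category.assoc, limit.lift_π, Fan.mk_π_app]
    rw [← Category.assoc]
    simp only [limit.lift_π, Fan.mk_π_app, Category.assoc, ← T.map_comp]
    have h : X.map (θ ≫ θ').op σ = X.map θ.op (X.map θ'.op σ) := by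
      rw [op_comp, FunctorToTypes.map_comp_apply]
    rw [← rep_aux X T (θ ≫ θ').op σ _ h]
    congr 1

end GZ

namespace GZ
variable {𝒜 : Type u} [Category.{v} 𝒜] [HasLimits 𝒜]

/-- The functor `Δ/φ : Δ/X ⥤ Δ/Y` induced by a simplicial map `φ : X ⟶ Y`. -/
def emapOp {X Y : SSet.{v}} (φ : X ⟶ Y) : SimplexCat X ⥤ SimplexCat Y :=
  (CategoryOfElements.map φ).op

/-- The base-change morphism of cosimplicial replacements induced by a simplicial map
`g : W ⟶ V` and a natural transformation `κ : (Δ/g) ⋙ T ⟶ S`. -/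
noncomputable def pullNT {W V : SSet.{v}} (g : W ⟶ V) (T : SimplexCat V ⥤ 𝒜)
    (S : SimplexCat W ⥤ 𝒜) (κ : emapOp g ⋙ T ⟶ S) : rep V T ⟶ rep W S where
  app n := Pi.lift fun x : W.obj (op n) =>
    Pi.π (fun σ : V.obj (op n) => T.obj (elt V σ)) (g.app _ x) ≫ κ.app (elt W x)
  naturality {n m} θ := by
    dsimp only [rep]
    ext x
    simp only [Category.assoc, limit.lift_π, Fan.mk_π_app, limit.lift_π_assoc]
    have h : V.map θ.op (g.app (op m) x) = g.app (op n) (W.map θ.op x) :=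
      (NatTrans.naturality_apply g θ.op x).symm
    refine (Category.assoc _ _ _).symm.trans ?_
    refine Eq.trans ?_ (Category.assoc _ _ _).symm
    refine Eq.trans ?_ (congrArg (fun t => Pi.π (fun σ : V.obj (op n) => T.obj (elt V σ))
      (g.app (op n) (W.map θ.op x)) ≫ t) (κ.naturality (eltHom W θ.op x)))
    refine Eq.trans ?_ (Category.assoc _ _ _)
    refine congrArg (fun t => t ≫ κ.app (elt W x)) ?_
    refine (limit.lift_π _ _).trans ?_
    exact (rep_aux V T θ.op (g.app (op m) x) _ h).symm


/-- The Gabriel–Zisman cochain complex `C^*_GZ(X, T)`. -/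
noncomputable def cochainComplexGZ [Preadditive 𝒜] (X : SSet.{v}) (T : SimplexCat X ⥤ 𝒜) :
    CochainComplex 𝒜 ℕ :=
  (AlgebraicTopology.alternatingCofaceMapComplex 𝒜).obj (rep X T)

/-- The fiber `F_y = Δ[n] ×_Y X` of `f : X ⟶ Y` over a simplex `y : Δ[n] ⟶ Y`,
given by the (explicit) pullback of `f` along `y` in simplicial sets. -/
def fiber {X Y : SSet.{v}} (f : X ⟶ Y) {k : SimplexCategory}
    (y : (SSet.stdSimplex.obj k : SSet.{v}) ⟶ Y) : SSet.{v} where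
  obj m := {p : (SSet.stdSimplex.obj k).obj m × X.obj m // y.app m p.1 = f.app m p.2}
  map {m m'} θ := TypeCat.ofHom fun p => ⟨⟨(SSet.stdSimplex.obj k).map θ p.1.1, X.map θ p.1.2⟩, by
    have h1 := ConcreteCategory.congr_hom (y.naturality θ) p.1.1
    have h2 := ConcreteCategory.congr_hom (f.naturality θ) p.1.2
    dsimp at h1 h2 ⊢
    rw [h1, h2, p.2]⟩
  map_id m := by
    refine ConcreteCategory.hom_ext _ _ fun p => ?_
    apply Subtype.ext
    apply Prod.ext <;> simp
  map_comp {m m' m''} θ θ' := by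
    refine ConcreteCategory.hom_ext _ _ fun p => ?_
    apply Subtype.ext
    apply Prod.ext <;> simp

/-- First projection of the fiber, to the standard simplex. -/
def fiberP {X Y : SSet.{v}} (f : X ⟶ Y) {k : SimplexCategory}
    (y : (SSet.stdSimplex.obj k : SSet.{v}) ⟶ Y) :
    fiber f y ⟶ (SSet.stdSimplex.obj k : SSet.{v}) where
  app m := TypeCat.ofHom fun z => z.1.1

/-- Second projection of the fiber, to `X`. -/
def fiberYbar {X Y : SSet.{v}} (f : X ⟶ Y) {k : SimplexCategory}
    (y : (SSet.stdSimplex.obj k : SSet.{v}) ⟶ Y) :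
    fiber f y ⟶ X where
  app m := TypeCat.ofHom fun z => z.1.2

lemma eqToHom_nat {Y : SSet.{v}} (T : SimplexCat Y ⥤ 𝒜) {u w : SimplexCategoryᵒᵖ}
    (g : u ⟶ w) {a a' : Y.obj u} {b b' : Y.obj w} (ha : a = a') (hb : b = b')
    (h : Y.map g a = b) (h' : Y.map g a' = b') :
    T.map ((CategoryOfElements.homMk (Y.elementsMk u a) (Y.elementsMk w b) g h).op) ≫
        eqToHom (congrArg (fun s => T.obj (op (Y.elementsMk u s))) ha) =
      eqToHom (congrArg (fun s => T.obj (op (Y.elementsMk w s))) hb) ≫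
        T.map ((CategoryOfElements.homMk (Y.elementsMk u a') (Y.elementsMk w b') g h').op) := by
  subst ha; subst hb; simp

/-- The identification of the two restrictions of `T` to the simplex category of the
fiber, coming from the equality `y ∘ p = f ∘ ȳ`. -/
def κfib {X Y : SSet.{v}} (f : X ⟶ Y) {k : SimplexCategory}
    (y : (SSet.stdSimplex.obj k : SSet.{v}) ⟶ Y) (T : SimplexCat Y ⥤ 𝒜) :
    emapOp (fiberP f y) ⋙ (emapOp y ⋙ T) ⟶
      emapOp (fiberYbar f y) ⋙ (emapOp f ⋙ T) where
  app e := eqToHom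
    (congrArg (fun s => T.obj (op (Y.elementsMk e.unop.1 s))) e.unop.2.2)
  naturality {e e'} φ := eqToHom_nat T φ.unop.val e'.unop.2.2 e.unop.2.2 _ _

end GZ

namespace GZ
section Abstract
open HomologicalComplex HomologySequence ComposableArrows Abelian

section Four
variable {C : Type*} [Category* C] [Abelian C]
  {S₁ S₂ : ShortComplex (CochainComplex C ℕ)} (φ : S₁ ⟶ S₂)

lemma mono_tau1_succ (hS₁ : S₁.ShortExact) (hS₂ : S₂.ShortExact)
    (i : ℕ) (h₂ : Epi (homologyMap φ.τ₂ i)) (h₃ : Mono (homologyMap φ.τ₃ i))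
    (h₂' : Mono (homologyMap φ.τ₂ (i + 1))) : Mono (homologyMap φ.τ₁ (i + 1)) := by
  have hij : (ComplexShape.up ℕ).Rel i (i + 1) := rfl
  apply mono_of_epi_of_mono_of_mono
      ((δ₀Functor ⋙ δlastFunctor).map (mapComposableArrows₅ φ hS₁ hS₂ i (i + 1) hij))
  · exact (composableArrows₅_exact hS₁ i _ hij).δ₀.δlast
  · exact (composableArrows₅_exact hS₂ i _ hij).δ₀.δlast
  · exact h₂
  · exact h₃
  · exact h₂'

lemma epi_tau1_succ (hS₁ : S₁.ShortExact) (hS₂ : S₂.ShortExact)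
    (i : ℕ) (h₃ : Epi (homologyMap φ.τ₃ i))
    (h₂' : Epi (homologyMap φ.τ₂ (i + 1))) (h₃' : Mono (homologyMap φ.τ₃ (i + 1))) :
    Epi (homologyMap φ.τ₁ (i + 1)) := by
  have hij : (ComplexShape.up ℕ).Rel i (i + 1) := rfl
  apply epi_of_epi_of_epi_of_mono
      ((δ₀Functor ⋙ δ₀Functor).map (mapComposableArrows₅ φ hS₁ hS₂ i (i + 1) hij))
  · exact (composableArrows₅_exact hS₁ i _ hij).δ₀.δ₀
  · exact (composableArrows₅_exact hS₂ i _ hij).δ₀.δ₀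
  · exact h₃
  · exact h₂'
  · exact h₃'

lemma mono_tau1_zero (hS₁ : S₁.ShortExact)
    (h₂ : Mono (homologyMap φ.τ₂ 0)) : Mono (homologyMap φ.τ₁ 0) := by
  have := hS₁.mono_f
  have h := mono_homologyMap_of_mono_of_not_rel S₁.f 0 (by simp)
  have e : homologyMap φ.τ₁ 0 ≫ homologyMap S₂.f 0 = homologyMap S₁.f 0 ≫ homologyMap φ.τ₂ 0 := by
    rw [← homologyMap_comp, ← homologyMap_comp, φ.comm₁₂]
  have : Mono (homologyMap φ.τ₁ 0 ≫ homologyMap S₂.f 0) := by rw [e]; infer_instance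
  exact mono_of_mono _ (homologyMap S₂.f 0)

lemma epi_tau1_zero (hS₁ : S₁.ShortExact) (hS₂ : S₂.ShortExact)
    (h₂ : Epi (homologyMap φ.τ₂ 0)) (h₃ : Mono (homologyMap φ.τ₃ 0)) :
    Epi (homologyMap φ.τ₁ 0) := by
  have := hS₂.mono_f
  exact epi_of_mono_of_epi_of_mono (mapComposableArrows₂ φ 0)
      (composableArrows₂_exact hS₁ 0) (composableArrows₂_exact hS₂ 0)
      (mono_homologyMap_of_mono_of_not_rel S₂.f 0 (by simp)) h₂ h₃
end Four

section Ext
universe v₁ u₁ w₁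
variable {𝒜 : Type u} [Category.{v} 𝒜] [HasLimits 𝒜]
  {𝒵 : Type w₁} [Category.{v} 𝒵] {I : Type v} (S : I → 𝒵)

/-- index of the products -/
abbrev Idx (z : 𝒵) : Type v := Σ i : I, (S i ⟶ z)

/-- projections -/
noncomputable def cpi' (F : 𝒵ᵒᵖ ⥤ 𝒜) {z : 𝒵} {i : I} (a : S i ⟶ z) :
    (∏ᶜ fun j : Idx S z => F.obj (op (S j.1))) ⟶ F.obj (op (S i)) :=
  Pi.π (fun j : Idx S z => F.obj (op (S j.1))) ⟨i, a⟩

lemma lift_cpi' (F : 𝒵ᵒᵖ ⥤ 𝒜) {z : 𝒵} {W : 𝒜}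
    (g : ∀ j : Idx S z, W ⟶ F.obj (op (S j.1))) {i : I} (a : S i ⟶ z) :
    Pi.lift g ≫ cpi' S F a = g ⟨i, a⟩ :=
  (limit.lift_π _ _).trans rfl

/-- The coinduced functor. -/
noncomputable def coindObj (F : 𝒵ᵒᵖ ⥤ 𝒜) : 𝒵ᵒᵖ ⥤ 𝒜 where
  obj z := ∏ᶜ fun j : Idx S z.unop => F.obj (op (S j.1))
  map {z z'} b := Pi.lift fun j => cpi' S F (j.2 ≫ b.unop)
  map_id z := by
    refine Pi.hom_ext _ _ fun j => ?_
    refine (lift_cpi' S F _ j.2).trans ?_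
    refine Eq.trans (congrArg (cpi' S F) (Category.comp_id _)) ?_
    exact (Category.id_comp _).symm
  map_comp b b' := by
    refine Pi.hom_ext _ _ fun j => ?_
    refine (lift_cpi' S F _ j.2).trans ?_
    rw [Category.assoc]
    refine Eq.trans ?_ (congrArg _ (lift_cpi' S F _ j.2).symm)
    rw [lift_cpi']
    simp

/-- projections -/
noncomputable def cpi (F : 𝒵ᵒᵖ ⥤ 𝒜) {z : 𝒵ᵒᵖ} {i : I} (a : S i ⟶ z.unop) :
    (coindObj S F).obj z ⟶ F.obj (op (S i)) := cpi' S F a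

/-- lifts -/
noncomputable def clift (F : 𝒵ᵒᵖ ⥤ 𝒜) {z : 𝒵ᵒᵖ} {W : 𝒜}
    (g : ∀ (i : I) (_ : S i ⟶ z.unop), W ⟶ F.obj (op (S i))) : W ⟶ (coindObj S F).obj z :=
  Pi.lift fun j => g j.1 j.2

@[simp]
lemma clift_cpi (F : 𝒵ᵒᵖ ⥤ 𝒜) {z : 𝒵ᵒᵖ} {W : 𝒜}
    (g : ∀ (i : I) (_ : S i ⟶ z.unop), W ⟶ F.obj (op (S i))) {i : I} (a : S i ⟶ z.unop) :
    clift S F g ≫ cpi S F a = g i a := lift_cpi' S F _ a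

@[simp]
lemma coindObj_map_cpi (F : 𝒵ᵒᵖ ⥤ 𝒜) {z z' : 𝒵ᵒᵖ} (b : z ⟶ z') {i : I} (a : S i ⟶ z'.unop) :
    (coindObj S F).map b ≫ cpi S F a = cpi S F (a ≫ b.unop) := lift_cpi' S F _ a

@[simp]
lemma clift_cpi_assoc (F : 𝒵ᵒᵖ ⥤ 𝒜) {z : 𝒵ᵒᵖ} {W : 𝒜}
    (g : ∀ (i : I) (_ : S i ⟶ z.unop), W ⟶ F.obj (op (S i))) {i : I} (a : S i ⟶ z.unop)
    {B : 𝒜} (h : F.obj (op (S i)) ⟶ B) :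
    clift S F g ≫ cpi S F a ≫ h = g i a ≫ h := by
  rw [← Category.assoc, clift_cpi]

@[simp]
lemma coindObj_map_cpi_assoc (F : 𝒵ᵒᵖ ⥤ 𝒜) {z z' : 𝒵ᵒᵖ} (b : z ⟶ z') {i : I}
    (a : S i ⟶ z'.unop) {B : 𝒜} (h : F.obj (op (S i)) ⟶ B) :
    (coindObj S F).map b ≫ cpi S F a ≫ h = cpi S F (a ≫ b.unop) ≫ h := by
  rw [← Category.assoc, coindObj_map_cpi]

variable {S} in
lemma cobj_ext {F : 𝒵ᵒᵖ ⥤ 𝒜} {z : 𝒵ᵒᵖ} {W : 𝒜} {f g : W ⟶ (coindObj S F).obj z}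
    (h : ∀ (i : I) (a : S i ⟶ z.unop), f ≫ cpi S F a = g ≫ cpi S F a) : f = g :=
  Pi.hom_ext _ _ fun j => h j.1 j.2

/-- The coinduction functor. -/
@[simps]
noncomputable abbrev coind : (𝒵ᵒᵖ ⥤ 𝒜) ⥤ (𝒵ᵒᵖ ⥤ 𝒜) where
  obj F := coindObj S F
  map {F F'} α :=
    { app z := clift S F' fun i a => cpi S F a ≫ α.app _
      naturality z z' b := by refine cobj_ext fun i a => ?_; simp }
  map_id F := by ext z; refine cobj_ext fun i a => ?_; dsimp; simp
  map_comp α β := by ext z; refine cobj_ext fun i a => ?_; dsimp; simp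

/-- unit -/
@[simps]
noncomputable def coindUnit : 𝟭 (𝒵ᵒᵖ ⥤ 𝒜) ⟶ coind S where
  app F :=
    { app z := clift S F fun i a => F.map a.op
      naturality z z' b := by refine cobj_ext fun i a => ?_; dsimp; simp [← Functor.map_comp] }
  naturality F F' α := by ext z; refine cobj_ext fun i a => ?_; dsimp; simp

/-- multiplication -/
noncomputable def coindMul (F : 𝒵ᵒᵖ ⥤ 𝒜) : (coind S).obj ((coind S).obj F) ⟶ (coind S).obj F where
  app z := clift S F fun i a => cpi S ((coind S).obj F) a ≫ cpi S F (𝟙 (S i))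
  naturality z z' b := by refine cobj_ext fun i a => ?_; dsimp; simp

lemma coindUnit_mul (F : 𝒵ᵒᵖ ⥤ 𝒜) :
    (coindUnit S).app ((coind S).obj F) ≫ coindMul S F = 𝟙 _ := by
  ext z
  refine cobj_ext fun i a => ?_
  dsimp [coindMul]
  simp

/-- relative injectivity -/
def RelInj (F : 𝒵ᵒᵖ ⥤ 𝒜) : Prop := ∃ r, (coindUnit S).app F ≫ r = 𝟙 F

instance [Preadditive 𝒜] : (coind (𝒜 := 𝒜) S).Additive where
  map_add := by intros; ext z; refine cobj_ext fun i a => ?_; dsimp; simp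

/-- evaluation of coind as a limit -/
noncomputable def coindIso (F : 𝒵ᵒᵖ ⥤ 𝒜) (z : 𝒵) : (coindObj S F).obj (op z) ≅
    limit ((Discrete.functor fun j : Idx S z => op (S j.1)) ⋙ F) :=
  HasLimit.isoOfNatIso
      (F := Discrete.functor fun j : Idx S z => F.obj (op (S j.1)))
      (Discrete.natIso fun j => Iso.refl _)

lemma coindIso_hom_pi (F : 𝒵ᵒᵖ ⥤ 𝒜) (z : 𝒵) (j : Discrete (Idx S z)) :
    (coindIso S F z).hom ≫ limit.π ((Discrete.functor fun j : Idx S z => op (S j.1)) ⋙ F) j =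
      cpi S F (z := op z) j.as.2 := by
  refine (HasLimit.isoOfNatIso_hom_π _ _).trans ?_
  exact Category.comp_id _

/-- evaluation of coind as a product functor -/
noncomputable def coindEval (z : 𝒵) : coind (𝒜 := 𝒜) S ⋙ (evaluation _ _).obj (op z) ≅
    (Functor.whiskeringLeft (Discrete (Idx S z)) 𝒵ᵒᵖ 𝒜).obj
      (Discrete.functor fun j => op (S j.1)) ⋙ lim :=
  NatIso.ofComponents (fun F => coindIso S F z) (by
    intro F F' α
    apply limit.hom_ext
    rintro j
    have h := clift_cpi S F' (z := op z) (fun i a => cpi S F a ≫ α.app (op (S i))) j.as.2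
    have e := coindIso_hom_pi S F z j
    have e' := coindIso_hom_pi S F' z j
    rw [Category.assoc, Category.assoc]
    refine (congrArg _ e').trans (h.trans ?_)
    rw [← e, Category.assoc]
    refine congrArg _ ?_
    exact (limMap_π (F := (Discrete.functor fun j : Idx S z => op (S j.1)) ⋙ F)
      (G := (Discrete.functor fun j : Idx S z => op (S j.1)) ⋙ F')
      (Functor.whiskerLeft _ α) j).symm)

variable [Abelian 𝒜] [AB4Star 𝒜]

/-- local quasi-isomorphisms -/
def LocQ {K L : CochainComplex (𝒵ᵒᵖ ⥤ 𝒜) ℕ} (φ : K ⟶ L) : Prop :=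
  ∀ i, QuasiIso ((((evaluation _ _).obj (op (S i))).mapHomologicalComplex _).map φ)

lemma quasiIso_coind {K L : CochainComplex (𝒵ᵒᵖ ⥤ 𝒜) ℕ} (φ : K ⟶ L) (h : LocQ S φ) (z : 𝒵) :
    QuasiIso ((((evaluation _ _).obj (op z)).mapHomologicalComplex _).map
      (((coind S).mapHomologicalComplex _).map φ)) := by
  let R := (Functor.whiskeringLeft (Discrete (Idx S z)) 𝒵ᵒᵖ 𝒜).obj
      (Discrete.functor fun j => op (S j.1))
  have h1 : QuasiIso ((R.mapHomologicalComplex _).map φ) := by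
    rw [quasiIso_iff_evaluation]
    rintro ⟨j⟩
    exact h j.1
  have h2 : QuasiIso ((lim.mapHomologicalComplex _).map ((R.mapHomologicalComplex _).map φ)) := by
    have : (lim : (Discrete (Idx S z) ⥤ 𝒜) ⥤ 𝒜).Additive :=
      ⟨fun {F G a b} => by apply limit.hom_ext; intro j; simp⟩
    have : (lim : (Discrete (Idx S z) ⥤ 𝒜) ⥤ 𝒜).PreservesHomology := inferInstance
    exact HomologicalComplex.quasiIso_map_of_preservesHomology _ _
  have e : Arrow.mk ((((evaluation _ _).obj (op z)).mapHomologicalComplex _).map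
      (((coind S).mapHomologicalComplex _).map φ)) ≅ 
      Arrow.mk ((lim.mapHomologicalComplex _).map ((R.mapHomologicalComplex _).map φ)) := 
    ((Functor.mapArrowFunctor _ _).mapIso
      (NatIso.mapHomologicalComplex (coindEval (𝒜 := 𝒜) S z) (ComplexShape.up ℕ))).app (Arrow.mk φ)
  exact (quasiIso_iff_of_arrow_mk_iso _ _ e).2 h2
end Ext
end Abstract
end GZ
namespace GZ
section Abstract2
open HomologicalComplex HomologySequence Abelian
universe w₁
variable {𝒜 : Type u} [Category.{v} 𝒜] [Abelian 𝒜] [HasLimits 𝒜]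
  {𝒵 : Type w₁} [Category.{v} 𝒵] {I : Type v} (S : I → 𝒵)

/-- the unit on complexes -/
@[simps]
noncomputable def etaC (K : CochainComplex (𝒵ᵒᵖ ⥤ 𝒜) ℕ) :
    K ⟶ ((coind S).mapHomologicalComplex _).obj K where
  f i := (coindUnit S).app (K.X i)
  comm' i j _ := ((coindUnit S).naturality (K.d i j)).symm

/-- the short complex -/
@[simps]
noncomputable def SCo (K : CochainComplex (𝒵ᵒᵖ ⥤ 𝒜) ℕ) :
    ShortComplex (CochainComplex (𝒵ᵒᵖ ⥤ 𝒜) ℕ) where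
  X₁ := K
  X₂ := ((coind S).mapHomologicalComplex _).obj K
  X₃ := cokernel (etaC S K)
  f := etaC S K
  g := cokernel.π _
  zero := by simp

lemma etaC_nat {K L : CochainComplex (𝒵ᵒᵖ ⥤ 𝒜) ℕ} (φ : K ⟶ L) :
    etaC S K ≫ ((coind S).mapHomologicalComplex _).map φ = φ ≫ etaC S L := by
  ext i : 1
  exact ((coindUnit S).naturality (φ.f i)).symm

/-- functoriality -/
@[simps]
noncomputable def SCoMap {K L : CochainComplex (𝒵ᵒᵖ ⥤ 𝒜) ℕ} (φ : K ⟶ L) : SCo S K ⟶ SCo S L where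
  τ₁ := φ
  τ₂ := ((coind S).mapHomologicalComplex _).map φ
  τ₃ := cokernel.map _ _ φ (((coind S).mapHomologicalComplex _).map φ) (etaC_nat S φ)
  comm₁₂ := (etaC_nat S φ).symm
  comm₂₃ := (cokernel.π_desc _ _ _).symm

variable {S}

lemma SCo_shortExact {K : CochainComplex (𝒵ᵒᵖ ⥤ 𝒜) ℕ} (hK : ∀ q, RelInj S (K.X q)) :
    (SCo S K).ShortExact := by
  have : ∀ q, Mono ((etaC S K).f q) := fun q => by
    obtain ⟨r, hr⟩ := hK q
    exact mono_of_mono_fac hr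
  have : Mono (etaC S K) := mono_of_mono_f _ this
  exact
    { exact := ShortComplex.exact_cokernel _
      mono_f := this
      epi_g := coequalizer.π_epi }

/-- degree q part -/
lemma SCo_deg {K : CochainComplex (𝒵ᵒᵖ ⥤ 𝒜) ℕ} (hK : ∀ q, RelInj S (K.X q)) (q : ℕ) :
    ((SCo S K).map (eval _ _ q)).ShortExact :=
  (SCo_shortExact hK).map_of_exact _

lemma relInj_of_retract {F Q : 𝒵ᵒᵖ ⥤ 𝒜} (s : Q ⟶ (coind S).obj F) (p : (coind S).obj F ⟶ Q)
    (hs : s ≫ p = 𝟙 Q) : RelInj S Q := by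
  refine ⟨(coind S).map s ≫ coindMul S F ≫ p, ?_⟩
  have h1 : s ≫ (coindUnit S).app ((coind S).obj F) = (coindUnit S).app Q ≫ (coind S).map s :=
    (coindUnit S).naturality s
  have h2 := coindUnit_mul S F
  rw [← reassoc_of% h1, reassoc_of% h2, hs]

lemma relInj_coker {K : CochainComplex (𝒵ᵒᵖ ⥤ 𝒜) ℕ} (hK : ∀ q, RelInj S (K.X q)) (q : ℕ) :
    RelInj S ((SCo S K).X₃.X q) := by
  obtain ⟨r, hr⟩ := hK q
  have hex := SCo_deg hK q
  have := hex.epi_g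
  let sp : ((SCo S K).map (eval _ _ q)).Splitting :=
    ShortComplex.Splitting.ofExactOfRetraction _ hex.exact r hr this
  let s : (SCo S K).X₃.X q ⟶ (coind S).obj (K.X q) := sp.s
  have hs : s ≫ (cokernel.π (etaC S K)).f q = 𝟙 _ := sp.s_g
  exact relInj_of_retract s _ hs

/-- evaluate complex of functors -/
noncomputable abbrev evC (z : 𝒵) : CochainComplex (𝒵ᵒᵖ ⥤ 𝒜) ℕ ⥤ CochainComplex 𝒜 ℕ :=
  ((evaluation _ _).obj (op z)).mapHomologicalComplex _

lemma SCo_ev {K : CochainComplex (𝒵ᵒᵖ ⥤ 𝒜) ℕ} (hK : ∀ q, RelInj S (K.X q)) (z : 𝒵) :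
    ((SCo S K).map (evC z)).ShortExact := by
  apply shortExact_of_degreewise_shortExact
  intro q
  exact (SCo_deg hK q).map_of_exact ((evaluation _ _).obj (op z))

variable [AB4Star 𝒜]

/-- the class of maps -/
structure Good {K L : CochainComplex (𝒵ᵒᵖ ⥤ 𝒜) ℕ} (φ : K ⟶ L) : Prop where
  hK : ∀ q, RelInj S (K.X q)
  hL : ∀ q, RelInj S (L.X q)
  loc : LocQ S φ

lemma Good.next {K L : CochainComplex (𝒵ᵒᵖ ⥤ 𝒜) ℕ} {φ : K ⟶ L} (h : Good (S := S) φ) :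
    Good (S := S) (SCoMap S φ).τ₃ where
  hK := relInj_coker h.hK
  hL := relInj_coker h.hL
  loc i := quasiIso_τ₃ ((evC (S i)).mapShortComplex.map (SCoMap S φ)) (SCo_ev h.hK _)
    (SCo_ev h.hL _) (h.loc i) (quasiIso_coind S φ h.loc _)

lemma Good.main (z : 𝒵) (q : ℕ) : ∀ {K L : CochainComplex (𝒵ᵒᵖ ⥤ 𝒜) ℕ} {φ : K ⟶ L}
    (_ : Good (S := S) φ), IsIso (homologyMap ((evC z).map φ) q) := by
  have t2 : ∀ {K L : CochainComplex (𝒵ᵒᵖ ⥤ 𝒜) ℕ} {φ : K ⟶ L}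
    (_ : Good (S := S) φ) (q : ℕ), IsIso (homologyMap
      ((evC z).mapShortComplex.map (SCoMap S φ)).τ₂ q) := by
    intro K L φ h q
    have := quasiIso_coind S φ h.loc z
    exact (quasiIsoAt_iff_isIso_homologyMap _ _).1 (this.quasiIsoAt q)
  induction q with
  | zero =>
    have m : ∀ {K L : CochainComplex (𝒵ᵒᵖ ⥤ 𝒜) ℕ} {φ : K ⟶ L}
        (_ : Good (S := S) φ), Mono (homologyMap ((evC z).map φ) 0) := fun h =>
      have := t2 h 0
      mono_tau1_zero ((evC z).mapShortComplex.map (SCoMap S _)) (SCo_ev h.hK z) inferInstance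
    intro K L φ h
    have := t2 h 0
    have := m h
    have : Epi (homologyMap ((evC z).map φ) 0) :=
      epi_tau1_zero ((evC z).mapShortComplex.map (SCoMap S φ)) (SCo_ev h.hK z)
        (SCo_ev h.hL z) inferInstance (m h.next)
    exact isIso_of_mono_of_epi _
  | succ q ih =>
    have m : ∀ {K L : CochainComplex (𝒵ᵒᵖ ⥤ 𝒜) ℕ} {φ : K ⟶ L}
        (_ : Good (S := S) φ), Mono (homologyMap ((evC z).map φ) (q + 1)) := by
      intro K L φ h
      have := t2 h q
      have := t2 h (q + 1)
      have := ih h.next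
      exact mono_tau1_succ ((evC z).mapShortComplex.map (SCoMap S φ)) (SCo_ev h.hK z)
        (SCo_ev h.hL z) q inferInstance
        (inferInstanceAs (Mono (homologyMap ((evC z).map (SCoMap S φ).τ₃) q))) inferInstance
    intro K L φ h
    have := t2 h (q + 1)
    have := ih h.next
    have := m h
    have : Epi (homologyMap ((evC z).map φ) (q + 1)) :=
      epi_tau1_succ ((evC z).mapShortComplex.map (SCoMap S φ)) (SCo_ev h.hK z)
        (SCo_ev h.hL z) q
        (inferInstanceAs (Epi (homologyMap ((evC z).map (SCoMap S φ).τ₃) q)))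
        inferInstance (m h.next)
    exact isIso_of_mono_of_epi _
end Abstract2
end GZ
namespace GZ
section Flip
open HomologicalComplex AlgebraicTopology Abelian
universe w₁
variable {𝒜 : Type u} [Category.{v} 𝒜] [Abelian 𝒜]
  {𝒵 : Type w₁} [Category.{v} 𝒵]

/-- presheaf of cosimplicial objects to cosimplicial presheaf -/
@[simps]
def flipC (G : 𝒵ᵒᵖ ⥤ CosimplicialObject 𝒜) : CosimplicialObject (𝒵ᵒᵖ ⥤ 𝒜) where
  obj n :=
    { obj z := (G.obj z).obj n
      map a := (G.map a).app n
      map_id z := by rw [G.map_id]; rfl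
      map_comp a b := by rw [G.map_comp]; rfl }
  map θ :=
    { app z := (G.obj z).map θ
      naturality z z' a := ((G.map a).naturality θ).symm }
  map_id n := by ext z; exact (G.obj z).map_id n
  map_comp a b := by ext z; exact (G.obj z).map_comp a b

/-- on morphisms -/
@[simps]
def flipCMap {G G' : 𝒵ᵒᵖ ⥤ CosimplicialObject 𝒜} (φ : G ⟶ G') : flipC G ⟶ flipC G' where
  app n :=
    { app z := (φ.app z).app n
      naturality z z' a := congrArg (fun t => NatTrans.app t n) (φ.naturality a) }
  naturality n m θ := by ext z; exact (φ.app z).naturality θ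

/-- the complex -/
noncomputable abbrev cpx (G : 𝒵ᵒᵖ ⥤ CosimplicialObject 𝒜) : CochainComplex (𝒵ᵒᵖ ⥤ 𝒜) ℕ :=
  (alternatingCofaceMapComplex _).obj (flipC G)

lemma alt_d {C : Type*} [Category* C] [Preadditive C] (X : CosimplicialObject C) (i : ℕ) :
    ((alternatingCofaceMapComplex C).obj X).d i (i + 1) =
      AlternatingCofaceMapComplex.objD X i :=
  CochainComplex.of_d (fun n => X.obj (SimplexCategory.mk n))
    (AlternatingCofaceMapComplex.objD X) i

lemma ev_objD (G : 𝒵ᵒᵖ ⥤ CosimplicialObject 𝒜) (z : 𝒵) (n : ℕ) :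
    ((evaluation _ _).obj (op z)).map (AlternatingCofaceMapComplex.objD (flipC G) n) =
      AlternatingCofaceMapComplex.objD (G.obj (op z)) n := by
  unfold AlternatingCofaceMapComplex.objD
  rw [Functor.map_sum]
  refine Finset.sum_congr rfl fun i _ => ?_
  rw [Functor.map_zsmul]
  rfl

/-- evaluating -/
noncomputable def evIso (G : 𝒵ᵒᵖ ⥤ CosimplicialObject 𝒜) (z : 𝒵) :
    (evC z).obj (cpx G) ≅ (alternatingCofaceMapComplex _).obj (G.obj (op z)) :=
  HomologicalComplex.Hom.isoOfComponents (fun n => Iso.refl _) (by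
    rintro i j (rfl : i + 1 = j)
    refine (Category.id_comp _).trans (Eq.trans ?_ (Category.comp_id _).symm)
    have h1 : ((alternatingCofaceMapComplex _).obj (G.obj (op z))).d i (i + 1) =
      AlternatingCofaceMapComplex.objD (G.obj (op z)) i := alt_d _ _
    have h2 : (cpx G).d i (i + 1) =
      AlternatingCofaceMapComplex.objD (flipC G) i := alt_d _ _
    rw [h1]
    refine Eq.trans ?_ (congrArg (((evaluation _ _).obj (op z)).map) h2).symm
    exact (ev_objD G z i).symm)

lemma evIso_nat {G G' : 𝒵ᵒᵖ ⥤ CosimplicialObject 𝒜} (φ : G ⟶ G') (z : 𝒵) :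
    (evC z).map ((alternatingCofaceMapComplex _).map (flipCMap φ)) ≫ (evIso G' z).hom =
    (evIso G z).hom ≫ (alternatingCofaceMapComplex _).map (φ.app (op z)) := by
  ext n : 1
  exact (Category.comp_id _).trans (Category.id_comp _).symm

lemma ev_iff {G G' : 𝒵ᵒᵖ ⥤ CosimplicialObject 𝒜} (φ : G ⟶ G') (z : 𝒵) (q : ℕ) :
    IsIso (homologyMap ((evC z).map ((alternatingCofaceMapComplex _).map (flipCMap φ))) q) ↔
    IsIso (homologyMap ((alternatingCofaceMapComplex _).map (φ.app (op z))) q) := by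
  have h := congrArg (fun t => homologyMap t q) (evIso_nat φ z)
  simp only [homologyMap_comp] at h
  constructor
  · intro h1
    have : IsIso (homologyMap (evIso G z).hom q ≫
      homologyMap ((alternatingCofaceMapComplex _).map (φ.app (op z))) q) := by
      rw [← h]; infer_instance
    exact IsIso.of_isIso_comp_left (homologyMap (evIso G z).hom q) _
  · intro h1
    have : IsIso (homologyMap ((evC z).map ((alternatingCofaceMapComplex _).map (flipCMap φ))) q ≫
      homologyMap (evIso G' z).hom q) := by
      rw [h]; infer_instance
    exact IsIso.of_isIso_comp_right _ (homologyMap (evIso G' z).hom q)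

variable [HasLimits 𝒜] [AB4Star 𝒜] {I : Type v} {S : I → 𝒵}

/-- abstract main theorem -/
theorem abstract_main {G G' : 𝒵ᵒᵖ ⥤ CosimplicialObject 𝒜} (φ : G ⟶ G')
    (hG : ∀ n, RelInj S ((flipC G).obj n)) (hG' : ∀ n, RelInj S ((flipC G').obj n))
    (hφ : ∀ i q, IsIso (homologyMap ((alternatingCofaceMapComplex _).map (φ.app (op (S i)))) q))
    (z : 𝒵) (q : ℕ) :
    IsIso (homologyMap ((alternatingCofaceMapComplex _).map (φ.app (op z))) q) := by
  rw [← ev_iff]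
  refine Good.main (S := S) z q ⟨fun n => hG _, fun n => hG' _, fun i => ?_⟩
  refine ⟨fun q => ?_⟩
  rw [quasiIsoAt_iff_isIso_homologyMap]
  exact (ev_iff φ (S i) q).2 (hφ i q)
end Flip
end GZ
namespace GZ
section Concrete
variable {𝒜 : Type u} [Category.{v} 𝒜] [HasLimits 𝒜]

lemma over_app {Y : SSet.{v}} {Z W : Over Y} (a : Z ⟶ W) {m : SimplexCategoryᵒᵖ}
    (x : Z.left.obj m) : W.hom.app m (a.left.app m x) = Z.hom.app m x := by
  have h := ConcreteCategory.congr_hom (congrArg (fun t => NatTrans.app t m) (Over.w a)) x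
  exact h

/-- transport -/
def tr {Y : SSet.{v}} (T : SimplexCat Y ⥤ 𝒜) {m : SimplexCategoryᵒᵖ} {a b : Y.obj m} (h : a = b) :
    T.obj (elt Y a) ⟶ T.obj (elt Y b) :=
  eqToHom (congrArg (fun s => T.obj (op (Y.elementsMk m s))) h)

@[simp]
lemma tr_refl {Y : SSet.{v}} (T : SimplexCat Y ⥤ 𝒜) {m : SimplexCategoryᵒᵖ} {a : Y.obj m}
    (h : a = a) : tr T h = 𝟙 _ := rfl

lemma tr_tr {Y : SSet.{v}} (T : SimplexCat Y ⥤ 𝒜) {m : SimplexCategoryᵒᵖ} {a b c : Y.obj m}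
    (hab : a = b) (hbc : b = c) : tr T hab ≫ tr T hbc = tr T (hab.trans hbc) := by
  subst hab; subst hbc; simp

/-- comparison -/
def κOver {Y : SSet.{v}} (T : SimplexCat Y ⥤ 𝒜) {Z W : Over Y} (a : Z ⟶ W) :
    emapOp a.left ⋙ (emapOp W.hom ⋙ T) ⟶ emapOp Z.hom ⋙ T where
  app e := tr T (over_app a e.unop.2)
  naturality {e e'} φ := eqToHom_nat T φ.unop.val (over_app a e'.unop.2) (over_app a e.unop.2) _ _

/-- product -/
noncomputable def pr {Y : SSet.{v}} (T : SimplexCat Y ⥤ 𝒜) (Z : Over Y) {n : SimplexCategory}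
    (w : Z.left.obj (op n)) :
    (rep Z.left (emapOp Z.hom ⋙ T)).obj n ⟶ T.obj (elt Y (Z.hom.app (op n) w)) :=
  Pi.π (fun σ : Z.left.obj (op n) => (emapOp Z.hom ⋙ T).obj (elt Z.left σ)) w

lemma pr_ext {Y : SSet.{v}} {T : SimplexCat Y ⥤ 𝒜} {Z : Over Y} {n : SimplexCategory}
    {B : 𝒜} {f g : B ⟶ (rep Z.left (emapOp Z.hom ⋙ T)).obj n}
    (h : ∀ w, f ≫ pr T Z w = g ≫ pr T Z w) : f = g := Pi.hom_ext _ _ h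

lemma pr_tr {Y : SSet.{v}} (T : SimplexCat Y ⥤ 𝒜) (Z : Over Y) {n : SimplexCategory}
    {w w' : Z.left.obj (op n)} (h : w = w') {b : Y.obj (op n)} (h' : Z.hom.app (op n) w = b)
    (h'' : Z.hom.app (op n) w' = b) :
    pr T Z w ≫ tr T h' = pr T Z w' ≫ tr T h'' := by subst h; rfl

lemma pull_pr {Y : SSet.{v}} (T : SimplexCat Y ⥤ 𝒜) {Z W : Over Y} (a : Z ⟶ W)
    {n : SimplexCategory} (w : Z.left.obj (op n)) :
    (pullNT a.left (emapOp W.hom ⋙ T) (emapOp Z.hom ⋙ T) (κOver T a)).app n ≫ pr T Z w =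
      pr T W (a.left.app _ w) ≫ tr T (over_app a w) :=
  limit.lift_π _ _

/-- The presheaf of cosimplicial objects. -/
noncomputable def 𝓡 {Y : SSet.{v}} (T : SimplexCat Y ⥤ 𝒜) : (Over Y)ᵒᵖ ⥤ CosimplicialObject 𝒜 where
  obj Z := rep Z.unop.left (emapOp Z.unop.hom ⋙ T)
  map a := pullNT a.unop.left _ _ (κOver T a.unop)
  map_id Z := by
    apply NatTrans.ext; funext n
    refine pr_ext fun w => ?_
    refine (pull_pr T _ w).trans ?_
    refine (pr_tr T Z.unop (w' := w) (by simp) _ rfl).trans ?_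
    refine (Category.comp_id _).trans (Category.id_comp _).symm
  map_comp {Z Z' Z''} a b := by
    apply NatTrans.ext; funext n
    refine pr_ext fun w => ?_
    refine (pull_pr T _ w).trans ?_
    refine Eq.trans ?_ (Category.assoc _ _ _).symm
    refine Eq.trans ?_ (congrArg _ (pull_pr T _ w)).symm
    refine Eq.trans ?_ (Category.assoc _ _ _)
    refine Eq.trans ?_ (congrArg (· ≫ _) (pull_pr T _ _)).symm
    refine Eq.trans ?_ (Category.assoc _ _ _).symm
    rw [tr_tr]
    exact pr_tr T _ (by simp) _ _

lemma 𝓡_map_pr {Y : SSet.{v}} (T : SimplexCat Y ⥤ 𝒜) {Z W : Over Y} (a : Z ⟶ W)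
    {n : SimplexCategory} (w : Z.left.obj (op n)) :
    ((𝓡 T).map a.op).app n ≫ pr T Z w =
      pr T W (a.left.app _ w) ≫ tr T (over_app a w) := pull_pr T a w

section RI
variable {Y : SSet.{v}} {I : Type v} (S : I → Over Y) (Ψ : Over Y ⥤ Over Y) (n : SimplexCategory)

/-- data -/
structure Dat (Z : Over Y) where
  i : I
  a : S i ⟶ Z
  w : (Ψ.obj (S i)).left.obj (op n)

variable {S Ψ n}

/-- pushing forward -/
@[simps]
def Dat.push {Z Z' : Over Y} (d : Dat S Ψ n Z) (b : Z ⟶ Z') : Dat S Ψ n Z' := ⟨d.i, d.a ≫ b, d.w⟩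

/-- value -/
def Dat.val {Z : Over Y} (d : Dat S Ψ n Z) : (Ψ.obj Z).left.obj (op n) :=
  (Ψ.map d.a).left.app _ d.w

/-- the presheaf -/
noncomputable abbrev FΨ (T : SimplexCat Y ⥤ 𝒜) (Ψ : Over Y ⥤ Over Y) (n : SimplexCategory) :
    (Over Y)ᵒᵖ ⥤ 𝒜 := (flipC (Ψ.op ⋙ 𝓡 T)).obj n

/-- projection -/
noncomputable def prF (T : SimplexCat Y ⥤ 𝒜) (Z : Over Y) (w : (Ψ.obj Z).left.obj (op n)) :
    (FΨ T Ψ n).obj (op Z) ⟶ T.obj (elt Y ((Ψ.obj Z).hom.app _ w)) := pr T (Ψ.obj Z) w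

lemma prF_ext {T : SimplexCat Y ⥤ 𝒜} {Z : (Over Y)ᵒᵖ} {B : 𝒜} {f g : B ⟶ (FΨ T Ψ n).obj Z}
    (h : ∀ w, f ≫ prF T Z.unop w = g ≫ prF T Z.unop w) : f = g := Pi.hom_ext _ _ h

lemma prF_tr (T : SimplexCat Y ⥤ 𝒜) (Z : Over Y)
    {w w' : (Ψ.obj Z).left.obj (op n)} (h : w = w') {b : Y.obj (op n)}
    (h' : (Ψ.obj Z).hom.app (op n) w = b) (h'' : (Ψ.obj Z).hom.app (op n) w' = b) :
    prF T Z w ≫ tr T h' = prF T Z w' ≫ tr T h'' := by subst h; rfl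

lemma FΨ_map_prF (T : SimplexCat Y ⥤ 𝒜) {Z' Z : (Over Y)ᵒᵖ} (b : Z' ⟶ Z)
    (w : (Ψ.obj Z.unop).left.obj (op n)) :
    (FΨ T Ψ n).map b ≫ prF T Z.unop w =
      prF T Z'.unop ((Ψ.map b.unop).left.app _ w) ≫ tr T (over_app (Ψ.map b.unop) w) :=
  𝓡_map_pr T (Ψ.map b.unop) w

lemma FΨ_map_prF_assoc (T : SimplexCat Y ⥤ 𝒜) {Z' Z : (Over Y)ᵒᵖ} (b : Z' ⟶ Z)
    (w : (Ψ.obj Z.unop).left.obj (op n)) {B : 𝒜}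
    (h : T.obj (elt Y ((Ψ.obj Z.unop).hom.app _ w)) ⟶ B) :
    (FΨ T Ψ n).map b ≫ prF T Z.unop w ≫ h =
      prF T Z'.unop ((Ψ.map b.unop).left.app _ w) ≫ tr T (over_app (Ψ.map b.unop) w) ≫ h := by
  rw [← Category.assoc, FΨ_map_prF, Category.assoc]

lemma Dat.hom_val {Z : Over Y} (d : Dat S Ψ n Z) :
    (Ψ.obj (S d.i)).hom.app _ d.w = (Ψ.obj Z).hom.app _ d.val :=
  (over_app (Ψ.map d.a) d.w).symm

/-- projection -/
noncomputable def Dat.comp (T : SimplexCat Y ⥤ 𝒜) {Z : (Over Y)ᵒᵖ} (d : Dat S Ψ n Z.unop) :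
    (coindObj S (FΨ T Ψ n)).obj Z ⟶ T.obj (elt Y ((Ψ.obj Z.unop).hom.app _ d.val)) :=
  cpi S (FΨ T Ψ n) d.a ≫ prF T (S d.i) d.w ≫ tr T d.hom_val

lemma Dat.comp_congr (T : SimplexCat Y ⥤ 𝒜) {Z : (Over Y)ᵒᵖ} {d d' : Dat S Ψ n Z.unop} (h : d = d')
    {y : Y.obj (op n)} (hy : (Ψ.obj Z.unop).hom.app _ d.val = y) (hy') :
    d.comp T ≫ tr T hy = d'.comp T ≫ tr T hy' := by subst h; rfl

theorem relInj_of_dat (T : SimplexCat Y ⥤ 𝒜)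
    (c : ∀ Z : Over Y, (Ψ.obj Z).left.obj (op n) → Dat S Ψ n Z)
    (hc : ∀ Z w, (c Z w).val = w)
    (hn : ∀ (Z Z' : Over Y) (b : Z ⟶ Z') (w : (Ψ.obj Z).left.obj (op n)),
      c Z' ((Ψ.map b).left.app _ w) = (c Z w).push b) :
    RelInj S (FΨ T Ψ n) := by
  have hd : ∀ Z w, (Ψ.obj Z).hom.app _ (c Z w).val = (Ψ.obj Z).hom.app _ w := fun Z w => by rw [hc]
  let r : ∀ Z : (Over Y)ᵒᵖ, (coindObj S (FΨ T Ψ n)).obj Z ⟶ (FΨ T Ψ n).obj Z := fun Z =>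
    Pi.lift fun w => (c Z.unop w).comp T ≫ tr T (hd Z.unop w)
  have hr : ∀ Z w, r Z ≫ prF T Z.unop w = (c Z.unop w).comp T ≫ tr T (hd Z.unop w) :=
    fun Z w => limit.lift_π _ _
  refine ⟨{ app := fun Z => r Z, naturality := ?_ }, ?_⟩
  · intro Z' Z b
    refine prF_ext fun w => ?_
    rw [Category.assoc, Category.assoc, hr, FΨ_map_prF, reassoc_of% (hr Z'), tr_tr]
    refine Eq.trans ?_ (Dat.comp_congr T (hn _ _ b.unop w) _
      (by rw [← hn, hd, over_app (Ψ.map b.unop) w])).symm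
    unfold Dat.comp
    simp only [Category.assoc]
    rw [tr_tr, tr_tr]
    exact coindObj_map_cpi_assoc S (FΨ T Ψ n) b _ _
  · apply NatTrans.ext; funext Z
    refine prF_ext fun w => ?_
    refine (Category.assoc _ _ _).trans ?_
    refine (congrArg _ (hr Z w)).trans ?_
    unfold Dat.comp
    simp only [Category.assoc]
    rw [tr_tr]
    refine (clift_cpi_assoc S (FΨ T Ψ n) (fun i a => (FΨ T Ψ n).map a.op) _ _).trans ?_
    refine (FΨ_map_prF_assoc T (c Z.unop w).a.op (c Z.unop w).w _).trans ?_
    rw [tr_tr]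
    refine (prF_tr T Z.unop (hc _ w) _ rfl).trans ?_
    exact (Category.comp_id _).trans (Category.id_comp _).symm
end RI
end Concrete
end GZ
namespace GZ
section Final
variable {𝒜 : Type u} [Category.{v} 𝒜] [HasLimits 𝒜]

/-- The generalized fiber. -/
def fib {X Y W : SSet.{v}} (f : X ⟶ Y) (y : W ⟶ Y) : SSet.{v} where
  obj m := {p : W.obj m × X.obj m // y.app m p.1 = f.app m p.2}
  map {m m'} θ := TypeCat.ofHom fun p => ⟨⟨W.map θ p.1.1, X.map θ p.1.2⟩, by
    have h1 := ConcreteCategory.congr_hom (y.naturality θ) p.1.1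
    have h2 := ConcreteCategory.congr_hom (f.naturality θ) p.1.2
    dsimp at h1 h2 ⊢
    rw [h1, h2, p.2]⟩
  map_id m := by
    refine ConcreteCategory.hom_ext _ _ fun p => ?_
    apply Subtype.ext
    apply Prod.ext <;> simp
  map_comp {m m' m''} θ θ' := by
    refine ConcreteCategory.hom_ext _ _ fun p => ?_
    apply Subtype.ext
    apply Prod.ext <;> simp

/-- first projection -/
def fibP {X Y W : SSet.{v}} (f : X ⟶ Y) (y : W ⟶ Y) : fib f y ⟶ W where
  app m := TypeCat.ofHom fun z => z.1.1

/-- second projection -/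
def fibX {X Y W : SSet.{v}} (f : X ⟶ Y) (y : W ⟶ Y) : fib f y ⟶ X where
  app m := TypeCat.ofHom fun z => z.1.2

lemma fib_cond {X Y W : SSet.{v}} (f : X ⟶ Y) (y : W ⟶ Y) : fibP f y ≫ y = fibX f y ≫ f := by
  apply NatTrans.ext; funext m
  refine ConcreteCategory.hom_ext _ _ fun p => ?_
  exact p.2

/-- map of fibers -/
def fibMap {X Y W W' : SSet.{v}} (f : X ⟶ Y) {y : W ⟶ Y} {y' : W' ⟶ Y} (a : W ⟶ W')
    (h : a ≫ y' = y) : fib f y ⟶ fib f y' where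
  app m := TypeCat.ofHom fun z => ⟨⟨a.app m z.1.1, z.1.2⟩, by subst h; exact z.2⟩
  naturality m m' θ := by
    refine ConcreteCategory.hom_ext _ _ fun p => ?_
    apply Subtype.ext
    apply Prod.ext
    · exact ConcreteCategory.congr_hom (a.naturality θ) p.1.1
    · rfl

/-- The functor on the slice. -/
def Φ {X Y : SSet.{v}} (f : X ⟶ Y) : Over Y ⥤ Over Y where
  obj Z := Over.mk (fibX f Z.hom ≫ f)
  map {Z W} a := Over.homMk (fibMap f a.left (Over.w a)) (by
    apply NatTrans.ext; funext m
    refine ConcreteCategory.hom_ext _ _ fun p => ?_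
    rfl)
  map_id Z := by
    apply Over.OverMorphism.ext
    apply NatTrans.ext; funext m
    refine ConcreteCategory.hom_ext _ _ fun p => ?_
    rfl
  map_comp a b := by
    apply Over.OverMorphism.ext
    apply NatTrans.ext; funext m
    refine ConcreteCategory.hom_ext _ _ fun p => ?_
    rfl

/-- projection -/
def Φproj {X Y : SSet.{v}} (f : X ⟶ Y) : Φ f ⟶ 𝟭 (Over Y) where
  app Z := Over.homMk (fibP f Z.hom) (fib_cond f Z.hom)
  naturality Z W a := by
    apply Over.OverMorphism.ext
    apply NatTrans.ext; funext m
    refine ConcreteCategory.hom_ext _ _ fun p => ?_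
    rfl

/-- index of simplices -/
abbrev SI (Y : SSet.{v}) : Type v := Σ k : SimplexCategory, ((SSet.stdSimplex.obj k : SSet.{v}) ⟶ Y)

/-- the simplices over Y -/
abbrev SS (Y : SSet.{v}) (i : SI Y) : Over Y := Over.mk i.2

/-- tautological simplex -/
def idS (n : SimplexCategory) : (SSet.stdSimplex.obj n : SSet.{v}).obj (op n) :=
  SSet.stdSimplex.objEquiv.symm (𝟙 n)

lemma ysymm_idS {X : SSet.{v}} {n : SimplexCategory} (x : X.obj (op n)) :
    (SSet.yonedaEquiv.symm x).app _ (idS n) = x := by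
  refine (SSet.yonedaEquiv_symm_app_objEquiv_symm x (𝟙 n)).trans ?_
  simp

/-- data for the identity -/
def mkD {Y : SSet.{v}} {n : SimplexCategory} (Z : Over Y) (y : Y.obj (op n)) (w : Z.left.obj (op n))
    (h : Z.hom.app _ w = y) : Dat (SS Y) (𝟭 (Over Y)) n Z where
  i := ⟨n, SSet.yonedaEquiv.symm y⟩
  a := Over.homMk (SSet.yonedaEquiv.symm w) (by
    subst h; exact SSet.yonedaEquiv_symm_comp w Z.hom)
  w := idS n

lemma mkD_push {Y : SSet.{v}} {n : SimplexCategory} {Z Z' : Over Y} (b : Z ⟶ Z') (y : Y.obj (op n))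
    (w : Z.left.obj (op n)) (h : Z.hom.app _ w = y) :
    mkD Z' (Z'.hom.app _ (b.left.app _ w)) (b.left.app _ w) rfl = (mkD Z y w h).push b := by
  have e : ∀ y' (h' : Z'.hom.app _ (b.left.app _ w) = y'),
    mkD Z' (Z'.hom.app _ (b.left.app _ w)) (b.left.app _ w) rfl =
    mkD Z' y' (b.left.app _ w) h' := by rintro _ rfl; rfl
  rw [e y ((over_app b w).trans h)]
  unfold mkD Dat.push
  congr 1
  apply Over.OverMorphism.ext
  exact (SSet.yonedaEquiv_symm_comp w b.left).symm

lemma relInj_id {Y : SSet.{v}} (T : SimplexCat Y ⥤ 𝒜) (n : SimplexCategory) :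
    RelInj (SS Y) ((flipC ((𝟭 (Over Y)).op ⋙ 𝓡 T)).obj n) :=
  relInj_of_dat T (fun Z w => mkD Z _ w rfl) (fun Z w => ysymm_idS w)
    (fun Z Z' b w => mkD_push b _ w rfl)

/-- data for the fiber functor -/
def mkD' {X Y : SSet.{v}} (f : X ⟶ Y) {n : SimplexCategory} (Z : Over Y) (y : Y.obj (op n))
    (w : Z.left.obj (op n)) (x : X.obj (op n)) (h : Z.hom.app _ w = y) (hx : y = f.app _ x) :
    Dat (SS Y) (Φ f) n Z where
  i := ⟨n, SSet.yonedaEquiv.symm y⟩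
  a := Over.homMk (SSet.yonedaEquiv.symm w) (by
    subst h; exact SSet.yonedaEquiv_symm_comp w Z.hom)
  w := ⟨⟨idS n, x⟩, (ysymm_idS y).trans hx⟩

lemma mkD'_push {X Y : SSet.{v}} (f : X ⟶ Y) {n : SimplexCategory} {Z Z' : Over Y} (b : Z ⟶ Z')
    (y : Y.obj (op n))
    (w : Z.left.obj (op n)) (x : X.obj (op n)) (h : Z.hom.app _ w = y) (hx : y = f.app _ x) (hx') :
    mkD' f Z' (Z'.hom.app _ (b.left.app _ w)) (b.left.app _ w) x rfl hx' =
      (mkD' f Z y w x h hx).push b := by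
  have e : ∀ y' (h' : Z'.hom.app _ (b.left.app _ w) = y') (hy : y' = f.app _ x),
    mkD' f Z' (Z'.hom.app _ (b.left.app _ w)) (b.left.app _ w) x rfl hx' =
    mkD' f Z' y' (b.left.app _ w) x h' hy := by rintro _ rfl _; rfl
  rw [e y ((over_app b w).trans h) hx]
  unfold mkD' Dat.push
  congr 1
  apply Over.OverMorphism.ext
  exact (SSet.yonedaEquiv_symm_comp w b.left).symm

lemma relInj_Φ {X Y : SSet.{v}} (f : X ⟶ Y) (T : SimplexCat Y ⥤ 𝒜) (n : SimplexCategory) :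
    RelInj (SS Y) ((flipC ((Φ f).op ⋙ 𝓡 T)).obj n) :=
  relInj_of_dat T (fun Z w => mkD' f Z _ w.1.1 w.1.2 rfl w.2)
    (fun Z w => Subtype.ext (Prod.ext (ysymm_idS w.1.1) rfl))
    (fun Z Z' b w => mkD'_push f b _ w.1.1 w.1.2 rfl w.2 _)

/-- the comparison map -/
noncomputable def φR {X Y : SSet.{v}} (f : X ⟶ Y) (T : SimplexCat Y ⥤ 𝒜) :
    (𝟭 (Over Y)).op ⋙ 𝓡 T ⟶ (Φ f).op ⋙ 𝓡 T :=
  Functor.whiskerRight (NatTrans.op (Φproj f)) (𝓡 T)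

lemma φR_simplex {X Y : SSet.{v}} (f : X ⟶ Y) (T : SimplexCat Y ⥤ 𝒜) {k : SimplexCategory}
    (y : (SSet.stdSimplex.obj k : SSet.{v}) ⟶ Y) :
    (φR f T).app (op (Over.mk y)) = pullNT (fiberP f y) (emapOp y ⋙ T)
            (emapOp (fiberYbar f y) ⋙ (emapOp f ⋙ T)) (κfib f y T) := rfl

/-- section -/
def secX {X Y : SSet.{v}} (f : X ⟶ Y) : Over.mk f ≅ (Φ f).obj (Over.mk (𝟙 Y)) where
  hom := Over.homMk
    { app m := TypeCat.ofHom fun x => ⟨⟨f.app m x, x⟩, rfl⟩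
      naturality m m' θ := by
        refine ConcreteCategory.hom_ext _ _ fun p => ?_
        apply Subtype.ext
        apply Prod.ext
        · exact ConcreteCategory.congr_hom (f.naturality θ) p
        · rfl } rfl
  inv := Over.homMk (fibX f (𝟙 Y)) rfl
  hom_inv_id := rfl
  inv_hom_id := by
    apply Over.OverMorphism.ext
    apply NatTrans.ext; funext m
    refine ConcreteCategory.hom_ext _ _ fun p => ?_
    apply Subtype.ext
    apply Prod.ext
    · exact p.2.symm
    · rfl

lemma 𝓡_f {X Y : SSet.{v}} (f : X ⟶ Y) (T : SimplexCat Y ⥤ 𝒜) :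
    pullNT f T (emapOp f ⋙ T) (𝟙 (emapOp f ⋙ T)) =
     (φR f T).app (op (Over.mk (𝟙 Y))) ≫ (𝓡 T).map (secX f).hom.op := by
  have h : (𝓡 T).map (Over.homMk f : Over.mk f ⟶ Over.mk (𝟙 Y)).op =
    (φR f T).app (op (Over.mk (𝟙 Y))) ≫ (𝓡 T).map (secX f).hom.op :=
    (𝓡 T).map_comp ((Φproj f).app (Over.mk (𝟙 Y))).op (secX f).hom.op
  exact h
end Final
end GZ
open GZ in
theorem stmt_16 {𝒜 : Type u} [Category.{v} 𝒜] [Abelian 𝒜] [HasLimits 𝒜] [AB4Star 𝒜]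
    {X Y : SSet.{v}} (f : X ⟶ Y) (T : SimplexCat Y ⥤ 𝒜)
    (hlct : ∀ (k : SimplexCategory) (y : (SSet.stdSimplex.obj k : SSet.{v}) ⟶ Y)
      (q : ℕ),
      IsIso (HomologicalComplex.homologyMap
        ((AlgebraicTopology.alternatingCofaceMapComplex 𝒜).map
          (pullNT (fiberP f y) (emapOp y ⋙ T)
            (emapOp (fiberYbar f y) ⋙ (emapOp f ⋙ T)) (κfib f y T))) q)) :
    ∀ q : ℕ, IsIso (HomologicalComplex.homologyMap
      ((AlgebraicTopology.alternatingCofaceMapComplex 𝒜).map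
        (pullNT f T (emapOp f ⋙ T) (𝟙 (emapOp f ⋙ T)))) q) := by
  have key : ∀ q, IsIso (HomologicalComplex.homologyMap
      ((AlgebraicTopology.alternatingCofaceMapComplex 𝒜).map
        ((φR f T).app (op (Over.mk (𝟙 Y))))) q) :=
    fun q => abstract_main (S := SS Y) (φR f T) (relInj_id T) (relInj_Φ f T)
      (fun i q => hlct i.1 i.2 q) _ q
  intro q
  have := key q
  have e := congrArg (fun t => HomologicalComplex.homologyMap
    ((AlgebraicTopology.alternatingCofaceMapComplex 𝒜).map t) q) (𝓡_f f T)
  refine cast (congrArg (fun t => IsIso t) e.symm) ?_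
  have h2 := HomologicalComplex.homologyMap_comp ((AlgebraicTopology.alternatingCofaceMapComplex 𝒜).map
        ((φR f T).app (op (Over.mk (𝟙 Y))))) ((AlgebraicTopology.alternatingCofaceMapComplex 𝒜).map
          ((𝓡 T).map (secX f).hom.op)) q
  rw [← Functor.map_comp] at h2
  refine cast (congrArg (fun t => IsIso t) h2.symm) ?_
  have i1 : IsIso ((𝓡 T).map (secX f).hom.op) := inferInstance
  have i2 : IsIso ((AlgebraicTopology.alternatingCofaceMapComplex 𝒜).map
      ((𝓡 T).map (secX f).hom.op)) := Functor.map_isIso _ _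
  have i3 : IsIso (HomologicalComplex.homologyMap
      ((AlgebraicTopology.alternatingCofaceMapComplex 𝒜).map
        ((𝓡 T).map (secX f).hom.op)) q) :=
    inferInstanceAs (IsIso ((HomologicalComplex.homologyFunctor 𝒜 _ q).map _))
  exact @IsIso.comp_isIso _ _ _ _ _ _ _ this i3
end
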